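/- arXiv:2407.08438 — 6 statements merged into one kernel-verified Lean document; each statement's English description precedes it below -/
import Mathlib

section
/- Let K be a number field and let R be a sieve in residue form for K. Assume there is a finite subset T ⊆ 𝓞_K such that for every nonzero prime ideal 𝔭 and every x ∈ 𝓞_K with x ∈ R_𝔭 there exists t ∈ T with x − t ∈ 𝔭², and assume that for every 𝔭 the set R_𝔭 does not contain all residue classes of 𝓞_K/𝔭^{k(𝔭)}. Then the density of V(K,R) in 𝓞_K exists and is positive: as X → ∞, the ratio #{x ∈ V(K,R) : ‖x‖ ≤ X} / #{x ∈ 𝓞_K : ‖x‖ ≤ X} converges to the value of the convergent infinite product ∏_𝔭 (1 − meas(R_𝔭)) taken over all nonzero prime ideals 𝔭 of 𝓞_K, and this product is strictly positive. -/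
open NumberField

/-- A sieve in residue form for a number field `K`: for every (prime) ideal `P` of
`𝓞 K`, an exponent `k P ≥ 1` and a set `R P` of residue classes in `𝓞 K ⧸ P ^ k P`. -/
structure ResidueSieve (K : Type*) [Field K] [NumberField K] where
  k : Ideal (𝓞 K) → ℕ
  k_pos : ∀ P : Ideal (𝓞 K), 1 ≤ k P
  R : (P : Ideal (𝓞 K)) → Set (𝓞 K ⧸ P ^ k P)

/-- `x ∈ R_𝔭`: the residue class of `x` modulo `𝔭^{k(𝔭)}` belongs to `R 𝔭`. -/
def ResidueSieve.Mem {K : Type*} [Field K] [NumberField K] (S : ResidueSieve K)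
    (P : Ideal (𝓞 K)) (x : 𝓞 K) : Prop :=
  Ideal.Quotient.mk (P ^ S.k P) x ∈ S.R P

/-- `V(K,R)`: the set of integers of `K` avoiding the sieve at every nonzero prime. -/
def ResidueSieve.V {K : Type*} [Field K] [NumberField K] (S : ResidueSieve K) :
    Set (𝓞 K) :=
  {x | ∀ P : Ideal (𝓞 K), P.IsPrime → P ≠ ⊥ → ¬ S.Mem P x}

/-- The Haar measure of the sieve set at `P`: the number of excluded residue classes
divided by the total number `N(P)^{k(P)}` of residue classes modulo `P^{k(P)}`. -/
noncomputable def ResidueSieve.meas {K : Type*} [Field K] [NumberField K]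
    (S : ResidueSieve K) (P : Ideal (𝓞 K)) : ℝ :=
  (Nat.card ↥(S.R P) : ℝ) / (Ideal.absNorm P : ℝ) ^ (S.k P)

open Filter Topology

open scoped Classical in
theorem house_eq_norm_mixed {K : Type*} [Field K] [NumberField K] (x : K) :
    house x = ‖mixedEmbedding K x‖ := by
  apply le_antisymm
  · rw [house, NumberField.canonicalEmbedding.norm_le_iff]
    intro φ
    rw [mixedEmbedding.norm_eq_sup'_normAtPlace]
    refine le_trans ?_ (Finset.le_sup' _ (Finset.mem_univ (InfinitePlace.mk φ)))
    rw [mixedEmbedding.normAtPlace_apply, InfinitePlace.apply]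
  · rw [mixedEmbedding.norm_eq_sup'_normAtPlace]
    apply Finset.sup'_le
    intro w _
    rw [mixedEmbedding.normAtPlace_apply, ← InfinitePlace.norm_embedding_eq]
    exact norm_embedding_le_house x _

theorem house_finite {K : Type*} [Field K] [NumberField K] (X : ℝ) :
    {x : 𝓞 K | house (x : K) ≤ X}.Finite := by
  have h := NumberField.Embeddings.finite_of_norm_le K ℂ X
  have : Set.InjOn (fun x : 𝓞 K => (x : K)) ((fun x : 𝓞 K => (x : K)) ⁻¹' {x | IsIntegral ℤ x ∧ ∀ φ : K →+* ℂ, ‖φ x‖ ≤ X}) :=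
    fun a _ b _ h => RingOfIntegers.ext h
  refine (h.preimage this).subset ?_
  intro x hx
  exact ⟨x.2, fun φ => (norm_embedding_le_house _ φ).trans hx⟩

theorem count_asymp (K : Type*) [Field K] [NumberField K] :
    ∃ c : ℝ, 0 < c ∧ Tendsto (fun X : ℝ => (Nat.card {x : 𝓞 K // house (x : K) ≤ X} : ℝ) /
      X ^ (Module.finrank ℚ K)) atTop (𝓝 c) := by
  classical
  let L := mixedEmbedding.integerLattice K
  let b := Module.Free.chooseBasis ℤ L
  have hcard : Fintype.card (Module.Free.ChooseBasisIndex ℤ L) = Module.finrank ℚ K := by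
    rw [← Module.finrank_eq_card_chooseBasisIndex, ZLattice.rank ℝ L, mixedEmbedding.finrank]
  have hpos : 0 < Module.finrank ℚ K := Module.finrank_pos
  have : Nonempty (Module.Free.ChooseBasisIndex ℤ L) := by
    rw [← Fintype.card_pos_iff, hcard]; exact hpos
  set n := Module.finrank ℚ K with hn
  have hset : {x ∈ (Set.univ : Set (mixedEmbedding.mixedSpace K)) | ‖x‖ ^ n ≤ 1} = Metric.closedBall 0 1 := by
    ext x
    simp [pow_le_one_iff_of_nonneg, hpos.ne']
  have key := ZLattice.covolume.tendsto_card_le_div'' (L := L) b (X := Set.univ)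
    (fun _ _ _ _ => trivial) (F := fun x => ‖x‖ ^ n)
    (by intro x r hr; rw [norm_smul, mul_pow, Real.norm_of_nonneg hr, hcard])
    (by rw [hset]; exact Metric.isBounded_closedBall)
    (by rw [hset]; exact Metric.isClosed_closedBall.measurableSet)
    (by
      have hset' : {x : mixedEmbedding.mixedSpace K | x ∈ Set.univ ∧ ‖x‖ ^ n ≤ 1} = Metric.closedBall 0 1 := hset
      rw [hset']
      apply Convex.addHaar_frontier
      exact (convex_closedBall _ _).linear_image (b.ofZLatticeBasis ℝ L).equivFun.toLinearMap)
  rw [hset] at key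
  refine ⟨_, ?_, (key.comp (tendsto_pow_atTop (α := ℝ) hpos.ne')).congr' ?_⟩
  · set e := (b.ofZLatticeBasis ℝ L).equivFunL
    have himg : (b.ofZLatticeBasis ℝ L).equivFun '' (Metric.closedBall 0 1) = e '' (Metric.closedBall 0 1) := rfl
    rw [himg, MeasureTheory.measureReal_def]
    apply ENNReal.toReal_pos
    · apply ne_of_gt
      apply MeasureTheory.Measure.measure_pos_of_nonempty_interior
      refine ⟨e 0, ?_⟩
      rw [mem_interior]
      refine ⟨e '' Metric.ball 0 1, Set.image_mono Metric.ball_subset_closedBall,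
        e.toHomeomorph.isOpenMap _ Metric.isOpen_ball, ⟨0, by simp, rfl⟩⟩
    · exact ((isCompact_closedBall _ _).image e.continuous).measure_lt_top.ne
  · filter_upwards [eventually_gt_atTop 0] with X hX
    simp only [Function.comp]
    congr 2
    symm
    refine Nat.card_congr (Equiv.ofBijective (fun x => ⟨mixedEmbedding K (x.1 : K), ⟨trivial, ?_⟩, ?_⟩) ⟨?_, ?_⟩)
    · have := x.2
      rw [house_eq_norm_mixed] at this
      exact pow_le_pow_left₀ (norm_nonneg _) this n
    · show _ ∈ (mixedEmbedding.integerLattice K)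
      simp [mixedEmbedding.integerLattice]
    · intro x y h
      have := (mixedEmbedding_injective K) (Subtype.ext_iff.mp h)
      exact Subtype.ext (RingOfIntegers.ext this)
    · rintro ⟨y, ⟨-, hy⟩, hyL⟩
      obtain ⟨x, hx⟩ : ∃ x : 𝓞 K, mixedEmbedding K (x : K) = y := by
        have hyL' : y ∈ mixedEmbedding.integerLattice K := hyL
        simpa [mixedEmbedding.integerLattice] using hyL'
      refine ⟨⟨x, ?_⟩, Subtype.ext hx⟩
      rw [house_eq_norm_mixed, hx]
      exact le_of_pow_le_pow_left₀ hpos.ne' hX.le hy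

noncomputable def cntS {K : Type*} [Field K] [NumberField K] (A : Set (𝓞 K)) (X : ℝ) : ℝ :=
  (Set.ncard {x : 𝓞 K | x ∈ A ∧ house (x : K) ≤ X} : ℝ)

section cnt
variable {K : Type*} [Field K] [NumberField K]

theorem cntS_finite (A : Set (𝓞 K)) (X : ℝ) : {x : 𝓞 K | x ∈ A ∧ house (x : K) ≤ X}.Finite :=
  (house_finite X).subset fun _ h => h.2

theorem cntS_nonneg (A : Set (𝓞 K)) (X : ℝ) : 0 ≤ cntS A X := Nat.cast_nonneg _

theorem cntS_inj {A B : Set (𝓞 K)} {X Y : ℝ} (f : 𝓞 K → 𝓞 K) (hf : Function.Injective f)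
    (h : ∀ x ∈ A, house (x : K) ≤ X → f x ∈ B ∧ house (f x : K) ≤ Y) : cntS A X ≤ cntS B Y := by
  unfold cntS
  have := Set.ncard_le_ncard_of_injOn (s := {x : 𝓞 K | x ∈ A ∧ house (x : K) ≤ X}) f
    (fun x hx => h x hx.1 hx.2) hf.injOn (cntS_finite B Y)
  exact_mod_cast this

theorem cntS_mono {A B : Set (𝓞 K)} {X Y : ℝ} (h : A ⊆ B) (hXY : X ≤ Y) : cntS A X ≤ cntS B Y :=
  cntS_inj id Function.injective_id fun _ hx hX => ⟨h hx, hX.trans hXY⟩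

theorem house_sub_le' (a b : K) : house (a - b) ≤ house a + house b := by
  simp only [house, map_sub]; apply norm_sub_le

theorem cntS_univ_asymp (K : Type*) [Field K] [NumberField K] : ∃ c : ℝ, 0 < c ∧ Tendsto (fun X : ℝ => cntS (Set.univ : Set (𝓞 K)) X /
      X ^ (Module.finrank ℚ K)) atTop (𝓝 c) := by
  obtain ⟨c, hc, h⟩ := count_asymp K
  refine ⟨c, hc, h.congr fun X => ?_⟩
  simp only [cntS, Set.mem_univ, true_and]
  rfl

theorem cntS_univ_pos {X : ℝ} (hX : 0 ≤ X) : 1 ≤ cntS (Set.univ : Set (𝓞 K)) X := by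
  unfold cntS
  have : 0 < Set.ncard {x : 𝓞 K | x ∈ Set.univ ∧ house (x : K) ≤ X} := by
    rw [Set.ncard_pos (cntS_finite _ _)]
    exact ⟨0, trivial, by simpa [house] using hX⟩
  exact_mod_cast this

theorem tendsto_shift_ratio (C : ℝ) (n : ℕ) : Tendsto (fun X : ℝ => (X + C) ^ n / X ^ n) atTop (𝓝 1) := by
  have h1 : Tendsto (fun X : ℝ => (1 + C / X) ^ n) atTop (𝓝 ((1 + 0) ^ n)) :=
    ((tendsto_const_nhds.div_atTop tendsto_id).const_add 1).pow n
  simp only [add_zero, one_pow] at h1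
  refine h1.congr' ?_
  filter_upwards [eventually_gt_atTop 0] with X hX
  rw [← div_pow]; congr 1; field_simp

theorem cntS_shift (C : ℝ) : Tendsto (fun X : ℝ => cntS (Set.univ : Set (𝓞 K)) (X + C) /
    cntS (Set.univ : Set (𝓞 K)) X) atTop (𝓝 1) := by
  obtain ⟨c, hc, h⟩ := cntS_univ_asymp K
  have h1 := h.comp (tendsto_atTop_add_const_right atTop C tendsto_id)
  have h2 := (h1.mul (tendsto_shift_ratio C (Module.finrank ℚ K))).div h hc.ne'
  simp only [mul_one, div_self hc.ne'] at h2
  refine h2.congr' ?_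
  filter_upwards [eventually_gt_atTop 0, eventually_gt_atTop (-C)] with X hX hX2
  have : 0 < X + C := by linarith
  have := cntS_univ_pos (K := K) hX.le
  simp only [Function.comp, id, Pi.div_apply]
  field_simp

open scoped Classical in
theorem cntS_mk_sum (I : Ideal (𝓞 K)) [Finite (𝓞 K ⧸ I)] [Fintype (𝓞 K ⧸ I)] (W : Finset (𝓞 K ⧸ I)) (X : ℝ) :
    cntS {x : 𝓞 K | Ideal.Quotient.mk I x ∈ W} X =
      ∑ q ∈ W, cntS {x : 𝓞 K | Ideal.Quotient.mk I x = q} X := by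
  unfold cntS
  rw [Set.ncard_eq_toFinset_card _ (cntS_finite _ _)]
  rw [Finset.card_eq_sum_card_fiberwise (f := Ideal.Quotient.mk I) (t := W)]
  · push_cast
    refine Finset.sum_congr rfl fun q hq => ?_
    rw [Set.ncard_eq_toFinset_card _ (cntS_finite _ _)]
    congr 2
    ext x
    simp only [Finset.mem_filter, Set.Finite.mem_toFinset, Set.mem_ofPred_eq]
    constructor
    · rintro ⟨⟨a, b⟩, c⟩; exact ⟨c, b⟩
    · rintro ⟨rfl, b⟩; exact ⟨⟨hq, b⟩, rfl⟩
  · intro x hx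
    simp only [Set.Finite.coe_toFinset, Set.mem_ofPred_eq] at hx
    exact hx.1

theorem class_density (I : Ideal (𝓞 K)) (hI : I ≠ ⊥) (q : 𝓞 K ⧸ I) :
    Tendsto (fun X : ℝ => cntS {x : 𝓞 K | Ideal.Quotient.mk I x = q} X /
      cntS (Set.univ : Set (𝓞 K)) X) atTop (𝓝 (1 / (Nat.card (𝓞 K ⧸ I) : ℝ))) := by
  classical
  have : Finite (𝓞 K ⧸ I) := Ideal.finiteQuotientOfFreeOfNeBot I hI
  have := Fintype.ofFinite (𝓞 K ⧸ I)
  set N : ℝ := (Nat.card (𝓞 K ⧸ I) : ℝ) with hN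
  have hNpos : 0 < N := by rw [hN]; exact_mod_cast Nat.card_pos
  let r : 𝓞 K ⧸ I → 𝓞 K := fun q => Quotient.out q
  have hr : ∀ q, Ideal.Quotient.mk I (r q) = q := fun q => Quotient.out_eq q
  obtain ⟨C, hC⟩ : ∃ C : ℝ, ∀ a b : 𝓞 K ⧸ I, house ((r b - r a : 𝓞 K) : K) ≤ C := by
    obtain ⟨C, hC⟩ := (Set.finite_range (fun p : (𝓞 K ⧸ I) × (𝓞 K ⧸ I) => house ((r p.2 - r p.1 : 𝓞 K) : K))).bddAbove
    exact ⟨C, fun a b => hC ⟨(a, b), rfl⟩⟩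
  have hcomp : ∀ a b X, cntS {x : 𝓞 K | Ideal.Quotient.mk I x = a} X ≤
      cntS {x : 𝓞 K | Ideal.Quotient.mk I x = b} (X + C) := by
    intro a b X
    apply cntS_inj (fun x => x + (r b - r a)) (add_left_injective _)
    intro x hx hX
    refine ⟨?_, ?_⟩
    · simp only [Set.mem_ofPred_eq] at hx ⊢
      rw [map_add, map_sub, hr, hr, hx]; abel
    · have := house_add_le (x : K) ((r b - r a : 𝓞 K) : K)
      have h2 := hC a b
      rw [show ((x + (r b - r a) : 𝓞 K) : K) = (x : K) + ((r b - r a : 𝓞 K) : K) by simp]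
      linarith
  have hsum : ∀ X, cntS (Set.univ : Set (𝓞 K)) X = ∑ q : 𝓞 K ⧸ I, cntS {x : 𝓞 K | Ideal.Quotient.mk I x = q} X := by
    intro X
    rw [← cntS_mk_sum]
    congr 1
    ext; simp
  have hcard : (Finset.univ : Finset (𝓞 K ⧸ I)).card = Nat.card (𝓞 K ⧸ I) := by
    rw [Nat.card_eq_fintype_card]; rfl
  have hup : ∀ X, N * cntS {x : 𝓞 K | Ideal.Quotient.mk I x = q} X ≤ cntS (Set.univ : Set (𝓞 K)) (X + C) := by
    intro X
    rw [hsum, hN, ← hcard, ← nsmul_eq_mul]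
    exact Finset.card_nsmul_le_sum _ _ _ fun b _ => hcomp q b X
  have hlo : ∀ X, cntS (Set.univ : Set (𝓞 K)) (X + -C) ≤ N * cntS {x : 𝓞 K | Ideal.Quotient.mk I x = q} X := by
    intro X
    rw [hsum, hN, ← hcard, ← nsmul_eq_mul]
    refine Finset.sum_le_card_nsmul _ _ _ fun b _ => ?_
    have := hcomp b q (X + -C)
    rwa [neg_add_cancel_right] at this
  refine tendsto_of_tendsto_of_tendsto_of_le_of_le' ((cntS_shift (K := K) (-C)).div_const N)
    ((cntS_shift (K := K) C).div_const N) ?_ ?_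
  · filter_upwards [eventually_ge_atTop 0] with X hX
    have h1 := cntS_univ_pos (K := K) hX
    rw [div_div, div_le_div_iff₀ (by positivity) (by positivity)]
    nlinarith [hlo X]
  · filter_upwards [eventually_ge_atTop 0] with X hX
    have h1 := cntS_univ_pos (K := K) hX
    rw [div_div, div_le_div_iff₀ (by positivity) (by positivity)]
    nlinarith [hup X]

theorem set_density (I : Ideal (𝓞 K)) (hI : I ≠ ⊥) (W : Set (𝓞 K ⧸ I)) :
    Tendsto (fun X : ℝ => cntS {x : 𝓞 K | Ideal.Quotient.mk I x ∈ W} X /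
      cntS (Set.univ : Set (𝓞 K)) X) atTop (𝓝 ((Nat.card W : ℝ) / (Nat.card (𝓞 K ⧸ I) : ℝ))) := by
  classical
  have : Finite (𝓞 K ⧸ I) := Ideal.finiteQuotientOfFreeOfNeBot I hI
  have := Fintype.ofFinite (𝓞 K ⧸ I)
  have h := tendsto_finsetSum W.toFinset (fun q _ => class_density I hI q)
  simp only [← Finset.sum_div, ← cntS_mk_sum] at h
  convert h using 2
  · simp
  · simp [Nat.card_eq_fintype_card]

theorem norm_le_house_pow (y : 𝓞 K) : ((Algebra.norm ℤ y).natAbs : ℝ) ≤ house (y : K) ^ (Module.finrank ℚ K) := by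
  have hpos : 0 < Module.finrank ℚ K := Module.finrank_pos
  obtain ⟨σ⟩ : Nonempty (K →+* ℂ) := inferInstance
  have h := norm_norm_le_norm_mul_house_pow (y : K) σ
  have h2 := norm_embedding_le_house (y : K) σ
  have h3 : house (y : K) * house (y : K) ^ (Module.finrank ℚ K - 1) = house (y : K) ^ (Module.finrank ℚ K) := by
    rw [← pow_succ']; congr 1; omega
  have h4 : ‖Algebra.norm ℚ (y : K)‖ = ((Algebra.norm ℤ y).natAbs : ℝ) := by
    rw [← Algebra.coe_norm_int, Nat.cast_natAbs, ← Rat.norm_cast_real, Real.norm_eq_abs]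
    simp
  rw [← h4, ← h3]
  refine h.trans ?_
  gcongr
  exact pow_nonneg (house_nonneg _) _

theorem absNorm_le_house_pow (I : Ideal (𝓞 K)) {y : 𝓞 K} (hy : y ∈ I) (hy0 : y ≠ 0) :
    (Ideal.absNorm I : ℝ) ≤ house (y : K) ^ (Module.finrank ℚ K) := by
  refine le_trans ?_ (norm_le_house_pow y)
  have h := Ideal.absNorm_dvd_norm_of_mem hy
  have h2 : Algebra.norm ℤ y ≠ 0 := by simpa [Algebra.norm_eq_zero_iff] using hy0
  have h3 := Int.natAbs_dvd_natAbs.mpr h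
  simp only [Int.natAbs_natCast] at h3
  exact_mod_cast Nat.le_of_dvd (Int.natAbs_pos.mpr h2) h3

theorem cnt_bounds (K : Type*) [Field K] [NumberField K] : ∃ c₁ c₂ X₀ : ℝ, 0 < c₁ ∧ 0 < c₂ ∧ 1 ≤ X₀ ∧
    (∀ X, 0 ≤ X → c₁ * X ^ (Module.finrank ℚ K) ≤ cntS (Set.univ : Set (𝓞 K)) X) ∧
    (∀ X, X₀ ≤ X → cntS (Set.univ : Set (𝓞 K)) X ≤ c₂ * X ^ (Module.finrank ℚ K)) := by
  obtain ⟨c, hc, h⟩ := cntS_univ_asymp K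
  have h1 := h.eventually (Ioo_mem_nhds (show c / 2 < c by linarith) (show c < 2 * c by linarith))
  obtain ⟨X₁, hX₁⟩ := eventually_atTop.mp h1
  set X₀ := max X₁ 1
  have hX0 : 1 ≤ X₀ := le_max_right _ _
  refine ⟨min (c / 2) ((X₀ ^ (Module.finrank ℚ K))⁻¹), 2 * c, X₀, by positivity, by positivity, hX0, ?_, ?_⟩
  · intro X hX
    by_cases hXX : X₀ ≤ X
    · have := (hX₁ X ((le_max_left _ _).trans hXX)).1
      have hXp : 0 < X := by linarith
      rw [lt_div_iff₀ (by positivity)] at this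
      refine le_trans ?_ this.le
      gcongr
      exact min_le_left _ _
    · refine le_trans ?_ (cntS_univ_pos hX)
      push Not at hXX
      calc _ ≤ (X₀ ^ (Module.finrank ℚ K))⁻¹ * X₀ ^ (Module.finrank ℚ K) := by
            gcongr
            exact min_le_right _ _
        _ = 1 := inv_mul_cancel₀ (by positivity)
  · intro X hX
    have := (hX₁ X ((le_max_left _ _).trans hX)).2
    have hXp : 0 < X := by linarith
    rw [div_lt_iff₀ (by positivity)] at this
    exact this.le

theorem ideal_count (K : Type*) [Field K] [NumberField K] : ∃ C Y₀ : ℝ, 0 < C ∧ 1 ≤ Y₀ ∧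
    ∀ I : Ideal (𝓞 K), I ≠ ⊥ → ∀ Y, Y₀ ≤ Y →
      cntS {y : 𝓞 K | y ∈ I ∧ y ≠ 0} Y ≤ C * Y ^ (Module.finrank ℚ K) / (Ideal.absNorm I : ℝ) := by
  obtain ⟨c₁, c₂, X₀, hc₁, hc₂, hX₀, hlo, hup⟩ := cnt_bounds K
  have hpos : 0 < Module.finrank ℚ K := Module.finrank_pos
  set n := Module.finrank ℚ K with hn
  refine ⟨c₂ * 6 ^ n / c₁, X₀, by positivity, hX₀, ?_⟩
  intro I hI Y hY
  have hN : 0 < (Ideal.absNorm I : ℝ) := by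
    have : Ideal.absNorm I ≠ 0 := by rwa [Ne, Ideal.absNorm_eq_zero_iff]
    exact_mod_cast Nat.pos_of_ne_zero this
  have hYp : 0 < Y := by linarith
  obtain ⟨D, hD0, hD⟩ : ∃ D : ℝ, 0 < D ∧ D ^ n = (Ideal.absNorm I : ℝ) :=
    ⟨(Ideal.absNorm I : ℝ) ^ ((n : ℝ)⁻¹), by positivity, Real.rpow_inv_natCast_pow hN.le hpos.ne'⟩
  have hsep : ∀ y ∈ I, y ≠ 0 → D ≤ house (y : K) := by
    intro y hy hy0
    have := absNorm_le_house_pow I hy hy0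
    rw [← hD] at this
    exact le_of_pow_le_pow_left₀ hpos.ne' (house_nonneg _) this
  by_cases hDY : Y < D
  · have : {y : 𝓞 K | y ∈ {y : 𝓞 K | y ∈ I ∧ y ≠ 0} ∧ house (y : K) ≤ Y} = ∅ := by
      ext y
      simp only [Set.mem_ofPred_eq, Set.mem_empty_iff_false, iff_false]
      rintro ⟨⟨h1, h2⟩, h3⟩
      linarith [hsep y h1 h2]
    rw [cntS, this]
    simp
    positivity
  push Not at hDY
  have hmul : cntS {y : 𝓞 K | y ∈ I ∧ y ≠ 0} Y * cntS (Set.univ : Set (𝓞 K)) (D / 3) ≤ cntS (Set.univ : Set (𝓞 K)) (2 * Y) := by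
    unfold cntS
    rw [← Nat.cast_mul, ← Set.ncard_prod]
    norm_cast
    apply Set.ncard_le_ncard_of_injOn (fun p : 𝓞 K × 𝓞 K => p.1 + p.2) _ _ (cntS_finite _ _)
    · rintro ⟨y, z⟩ ⟨hy, hz⟩
      refine ⟨trivial, ?_⟩
      have h1 : house (y : K) ≤ Y := hy.2
      have h2 : house (z : K) ≤ D / 3 := hz.2
      have := house_add_le (y : K) (z : K)
      simp only [map_add]
      linarith
    · rintro ⟨y, z⟩ ⟨hy, hz⟩ ⟨y', z'⟩ ⟨hy', hz'⟩ h
      simp only at h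
      have h2 : house (z : K) ≤ D / 3 := hz.2
      have h2' : house (z' : K) ≤ D / 3 := hz'.2
      have hyI : y ∈ I := hy.1.1
      have hyI' : y' ∈ I := hy'.1.1
      have hd : y - y' = z' - z := by linear_combination h
      by_cases h0 : y - y' = 0
      · have hz0 : z' - z = 0 := by rw [← hd, h0]
        rw [sub_eq_zero] at h0 hz0
        rw [h0, hz0]
      · have h5 := hsep _ (I.sub_mem hyI hyI') h0
        rw [hd, show ((z' - z : 𝓞 K) : K) = (z' : K) - (z : K) from map_sub _ _ _] at h5
        have := house_sub_le' (z' : K) (z : K)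
        linarith
  have h1 := hlo (D / 3) (by positivity)
  have h2 := hup (2 * Y) (by linarith)
  rw [div_pow, hD] at h1
  have h3 : cntS {y : 𝓞 K | y ∈ I ∧ y ≠ 0} Y * (c₁ * ((Ideal.absNorm I : ℝ) / 3 ^ n)) ≤ c₂ * (2 * Y) ^ n :=
    (mul_le_mul_of_nonneg_left h1 (cntS_nonneg _ _)).trans (hmul.trans h2)
  rw [mul_pow] at h3
  rw [le_div_iff₀ hN, div_mul_eq_mul_div, le_div_iff₀ hc₁, show (6 : ℝ) = 2 * 3 by norm_num, mul_pow]
  have h3' : (0:ℝ) < 3 ^ n := by positivity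
  calc _ = cntS {y : 𝓞 K | y ∈ I ∧ y ≠ 0} Y * (c₁ * ((Ideal.absNorm I : ℝ) / 3 ^ n)) * 3 ^ n := by field_simp
    _ ≤ c₂ * (2 ^ n * Y ^ n) * 3 ^ n := by gcongr
    _ = _ := by ring

end cnt

section main
variable {K : Type*} [Field K] [NumberField K]

theorem summable_ideal_norm (K : Type*) [Field K] [NumberField K] :
    Summable (fun I : Ideal (𝓞 K) => 1 / (Ideal.absNorm I : ℝ) ^ 2) := by
  classical
  have hfin : ∀ n : ℕ, Finite {I : Ideal (𝓞 K) // Ideal.absNorm I = n} := fun n =>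
    Ideal.finite_setOfPred_absNorm_eq n
  have h0 := (NumberField.Ideal.tendsto_norm_le_div_atTop₀ K).comp tendsto_natCast_atTop_atTop
  have hLS : LSeriesSummable (fun n => ((Nat.card {I : Ideal (𝓞 K) // Ideal.absNorm I = n} : ℝ) : ℂ)) 2 := by
    refine LSeriesSummable_of_sum_norm_bigO_and_nonneg (r := 1) ?_ (fun _ => Nat.cast_nonneg _) zero_le_one (by norm_num)
    have h1 : Tendsto (fun n : ℕ => (∑ k ∈ Finset.Icc 1 n, (Nat.card {I : Ideal (𝓞 K) // Ideal.absNorm I = k} : ℝ)) / (n : ℝ)) atTop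
        (𝓝 ((2 ^ InfinitePlace.nrRealPlaces K * (2 * Real.pi) ^ InfinitePlace.nrComplexPlaces K * Units.regulator K *
          (classNumber K : ℝ)) / ((Units.torsionOrder K : ℝ) * Real.sqrt |(discr K : ℝ)|))) := by
      refine h0.congr fun n ↦ ?_
      simp only [Function.comp_apply, Nat.cast_le, ← Nat.cast_sum]
      congr
      rw [← add_left_inj 1, ← Ideal.card_norm_le_eq_card_norm_le_add_one,
        show Finset.Icc 1 n = Finset.Ioc 0 n from Finset.Icc_succ_left_eq_Ioc _ _,
        show 1 = Nat.card {I : Ideal (𝓞 K) // Ideal.absNorm I = 0} by simp [Ideal.absNorm_eq_zero_iff],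
        Finset.sum_Ioc_add_eq_sum_Icc (n.zero_le),
        ← Finset.card_preimage_eq_sum_card_image_eq (fun k _ ↦ Ideal.finite_setOfPred_absNorm_eq k)]
      simp [Set.coe_eq_subtype]
    have h2 := h1.isBigO_one ℝ
    simp only [Real.rpow_one]
    refine Asymptotics.IsBigO.of_bound' ?_ |>.trans
      ((h2.mul (Asymptotics.isBigO_refl (fun n : ℕ => (n : ℝ)) atTop)).congr_right (fun n => one_mul _))
    filter_upwards [eventually_gt_atTop 0] with n hn
    rw [div_mul_cancel₀]
    exact_mod_cast hn.ne'
  have hs := hLS.norm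
  rw [← (Equiv.sigmaFiberEquiv (fun I : Ideal (𝓞 K) => Ideal.absNorm I)).summable_iff]
  rw [summable_sigma_of_nonneg (fun _ => by simp only [Function.comp]; positivity)]
  refine ⟨fun n => ?_, ?_⟩
  · have := hfin n
    exact Summable.of_finite
  · refine hs.congr fun n => ?_
    have := hfin n
    have hh : ∀ c : {I : Ideal (𝓞 K) // Ideal.absNorm I = n},
      ((fun I : Ideal (𝓞 K) => 1 / (Ideal.absNorm I : ℝ) ^ 2) ∘ (Equiv.sigmaFiberEquiv (fun I : Ideal (𝓞 K) => Ideal.absNorm I))) ⟨n, c⟩ = 1 / (n : ℝ) ^ 2 := by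
      intro c
      simp [Equiv.sigmaFiberEquiv, c.2]
    rw [tsum_congr hh, tsum_const, LSeries.norm_term_eq]
    rcases eq_or_ne n 0 with rfl | hn
    · simp
    · simp [hn]
      field_simp

abbrev PrimeIdl (K : Type*) [Field K] [NumberField K] := {P : Ideal (𝓞 K) // P.IsPrime ∧ P ≠ ⊥}

noncomputable def gI (P : PrimeIdl K) : ℝ := 1 / (Ideal.absNorm P.1 : ℝ) ^ 2

theorem gI_nonneg (P : PrimeIdl K) : 0 ≤ gI P := by unfold gI; positivity

theorem summable_gI : Summable (gI (K := K)) :=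
  (summable_ideal_norm K).comp_injective Subtype.val_injective

theorem cntS_biUnion {ι : Type*} (F : Finset ι) (A : ι → Set (𝓞 K)) (X : ℝ) :
    cntS {x | ∃ i ∈ F, x ∈ A i} X ≤ ∑ i ∈ F, cntS (A i) X := by
  classical
  unfold cntS
  rw [← Nat.cast_sum]
  norm_cast
  have : {x : 𝓞 K | x ∈ {x | ∃ i ∈ F, x ∈ A i} ∧ house (x : K) ≤ X} =
      ⋃ i ∈ F, {x : 𝓞 K | x ∈ A i ∧ house (x : K) ≤ X} := by
    ext x
    simp only [Set.mem_ofPred_eq, Set.mem_iUnion, exists_prop]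
    constructor
    · rintro ⟨⟨i, h1, h2⟩, h3⟩; exact ⟨i, h1, h2, h3⟩
    · rintro ⟨i, h1, h2, h3⟩; exact ⟨⟨i, h1, h2⟩, h3⟩
  rw [this]
  exact Finset.set_ncard_biUnion_le _ _

theorem cntS_union (A B : Set (𝓞 K)) (X : ℝ) : cntS (A ∪ B) X ≤ cntS A X + cntS B X := by
  unfold cntS
  norm_cast
  refine le_trans (le_of_eq ?_) (Set.ncard_union_le _ _)
  congr 1
  ext x
  simp only [Set.mem_union, Set.mem_ofPred_eq]
  tauto

theorem card_quot (I : Ideal (𝓞 K)) : Nat.card (𝓞 K ⧸ I) = Ideal.absNorm I := by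
  rw [Ideal.absNorm_apply, Submodule.cardQuot_apply]

theorem meas_eq (S : ResidueSieve K) (P : Ideal (𝓞 K)) :
    S.meas P = (Nat.card (S.R P) : ℝ) / (Nat.card (𝓞 K ⧸ P ^ S.k P) : ℝ) := by
  rw [ResidueSieve.meas, card_quot, map_pow]; push_cast; rfl

theorem meas_le (S : ResidueSieve K) (T : Finset (𝓞 K)) (P : PrimeIdl K)
    (hT : ∀ x : 𝓞 K, S.Mem P x → ∃ t ∈ T, x - t ∈ P.1 ^ 2) :
    S.meas P ≤ T.card * gI P := by
  have h1 := set_density (P.1 ^ S.k P) (pow_ne_zero _ P.2.2) (S.R P.1)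
  rw [← meas_eq] at h1
  have h2 := tendsto_finsetSum T (fun t _ => class_density (P.1 ^ 2) (pow_ne_zero _ P.2.2) (Ideal.Quotient.mk _ t))
  rw [Finset.sum_const, nsmul_eq_mul, card_quot, map_pow, Nat.cast_pow] at h2
  refine le_of_tendsto_of_tendsto' h1 h2 fun X => ?_
  rw [← Finset.sum_div]
  refine div_le_div_of_nonneg_right ?_ (cntS_nonneg _ _)
  refine le_trans (cntS_mono ?_ le_rfl) (cntS_biUnion T _ X)
  intro x hx
  obtain ⟨t, ht, h⟩ := hT x hx
  exact ⟨t, ht, Ideal.Quotient.eq.mpr h⟩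

theorem meas_nonneg (S : ResidueSieve K) (P : Ideal (𝓞 K)) : 0 ≤ S.meas P := by
  unfold ResidueSieve.meas; positivity

theorem card_compl_div (S : ResidueSieve K) (P : PrimeIdl K) :
    (Nat.card {q : 𝓞 K ⧸ P.1 ^ S.k P // q ∉ S.R P} : ℝ) / (Nat.card (𝓞 K ⧸ P.1 ^ S.k P) : ℝ) = 1 - S.meas P := by
  classical
  have : Finite (𝓞 K ⧸ P.1 ^ S.k P) := Ideal.finiteQuotientOfFreeOfNeBot _ (pow_ne_zero _ P.2.2)
  have h0 : (0:ℝ) < Nat.card (𝓞 K ⧸ P.1 ^ S.k P) := by exact_mod_cast Nat.card_pos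
  rw [meas_eq, eq_sub_iff_add_eq, ← add_div, div_eq_one_iff_eq h0.ne']
  have := Set.ncard_add_ncard_compl (S.R P.1)
  rw [add_comm]
  exact_mod_cast this

theorem one_sub_meas_pos (S : ResidueSieve K) (P : PrimeIdl K) (hne : S.R P ≠ Set.univ) :
    0 < 1 - S.meas P := by
  have : Finite (𝓞 K ⧸ P.1 ^ S.k P) := Ideal.finiteQuotientOfFreeOfNeBot _ (pow_ne_zero _ P.2.2)
  rw [← card_compl_div]
  have : Nonempty {q : 𝓞 K ⧸ P.1 ^ S.k P // q ∉ S.R P} := by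
    obtain ⟨q, hq⟩ := (Set.ne_univ_iff_exists_notMem _).mp hne
    exact ⟨q, hq⟩
  have h1 : 0 < Nat.card {q : 𝓞 K ⧸ P.1 ^ S.k P // q ∉ S.R P} := Nat.card_pos
  have h2 : 0 < Nat.card (𝓞 K ⧸ P.1 ^ S.k P) := Nat.card_pos
  positivity

theorem finite_density (S : ResidueSieve K) (Q : Finset (PrimeIdl K)) :
    Tendsto (fun X : ℝ => cntS {x : 𝓞 K | ∀ P ∈ Q, ¬ S.Mem P.1 x} X /
      cntS (Set.univ : Set (𝓞 K)) X) atTop (𝓝 (∏ P ∈ Q, (1 - S.meas P))) := by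
  classical
  let f : Q → Ideal (𝓞 K) := fun P => P.1.1 ^ S.k P.1.1
  have hf : Pairwise (Function.onFun IsCoprime f) := by
    intro P P' h
    apply IsCoprime.pow
    have h1 : P.1.1.IsMaximal := P.1.2.1.isMaximal P.1.2.2
    have h2 : P'.1.1.IsMaximal := P'.1.2.1.isMaximal P'.1.2.2
    exact Ideal.isCoprime_of_isMaximal fun h3 => h (Subtype.ext (Subtype.ext h3))
  have hI : (⨅ i, f i) ≠ ⊥ := by
    have h1 : (∏ i, f i) ≠ ⊥ := Finset.prod_ne_zero_iff.mpr fun i _ => pow_ne_zero _ i.1.2.2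
    intro h
    apply h1
    rw [eq_bot_iff, ← h, ← Finset.inf_univ_eq_iInf]
    exact Ideal.prod_le_inf
  let e := Ideal.quotientInfRingEquivPiQuotient f hf
  have h := set_density (⨅ i, f i) hI {q | ∀ i, e q i ∉ S.R i.1.1}
  convert h using 1
  · ext X
    congr 2
    ext x
    simp only [Set.mem_ofPred_eq]
    constructor
    · intro hx i
      exact hx i.1 i.2
    · intro hx P hP
      exact hx ⟨P, hP⟩
  · congr 1
    have h1 : Nat.card {q | ∀ i, e q i ∉ S.R i.1.1} = ∏ i : Q, Nat.card {q : 𝓞 K ⧸ f i // q ∉ S.R i.1.1} := by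
      rw [← Nat.card_pi]
      exact Nat.card_congr ((Equiv.subtypeEquiv e.toEquiv (fun q => Iff.rfl)).trans
        (Equiv.subtypePiEquivPi (p := fun i (q : 𝓞 K ⧸ f i) => q ∉ S.R i.1.1)))
    have h2 : Nat.card (𝓞 K ⧸ ⨅ i, f i) = ∏ i : Q, Nat.card (𝓞 K ⧸ f i) := by
      rw [← Nat.card_pi]
      exact Nat.card_congr e.toEquiv
    rw [h1, h2]
    push_cast
    rw [← Finset.prod_div_distrib, ← Finset.prod_coe_sort]
    exact Finset.prod_congr rfl fun i _ => (card_compl_div S i.1).symm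

theorem tail_bound (K : Type*) [Field K] [NumberField K] : ∃ C Y₀ : ℝ, 0 < C ∧ 1 ≤ Y₀ ∧
    ∀ (Q : Finset (PrimeIdl K)) (t : 𝓞 K) (X : ℝ), Y₀ ≤ X →
      cntS {x : 𝓞 K | ∃ P ∉ Q, x - t ∈ P.1 ^ 2} X ≤
        1 + C * (X + house (t : K)) ^ (Module.finrank ℚ K) * (∑' P, gI (K := K) P - ∑ P ∈ Q, gI P) := by
  classical
  obtain ⟨C, Y₀, hC, hY₀, h⟩ := ideal_count K
  refine ⟨C, Y₀, hC, hY₀, fun Q t X hX => ?_⟩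
  set Y := X + house (t : K) with hYdef
  have hY : Y₀ ≤ Y := by have := house_nonneg (t : K); linarith
  have hshift : cntS {x : 𝓞 K | ∃ P ∉ Q, x - t ∈ P.1 ^ 2} X ≤ cntS {y : 𝓞 K | ∃ P ∉ Q, y ∈ P.1 ^ 2} Y := by
    apply cntS_inj (fun x => x - t) (sub_left_injective)
    intro x hx hX
    refine ⟨hx, ?_⟩
    have := house_sub_le' (x : K) (t : K)
    rw [show ((x - t : 𝓞 K) : K) = (x : K) - (t : K) from map_sub _ _ _]
    linarith
  have hsplit : cntS {y : 𝓞 K | ∃ P ∉ Q, y ∈ P.1 ^ 2} Y ≤ cntS ({0} : Set (𝓞 K)) Y +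
      cntS {y : 𝓞 K | y ≠ 0 ∧ ∃ P ∉ Q, y ∈ P.1 ^ 2} Y := by
    refine le_trans (cntS_mono ?_ le_rfl) (cntS_union _ _ _)
    intro y hy
    by_cases h0 : y = 0
    · left; exact h0
    · right; exact ⟨h0, hy⟩
  have h0 : cntS ({0} : Set (𝓞 K)) Y ≤ 1 := by
    unfold cntS
    have : ({x : 𝓞 K | x ∈ ({0} : Set (𝓞 K)) ∧ house (x : K) ≤ Y}).ncard ≤ ({0} : Set (𝓞 K)).ncard :=
      Set.ncard_le_ncard (fun x hx => hx.1) (Set.finite_singleton _)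
    rw [Set.ncard_singleton] at this
    exact_mod_cast this
  have hmain : cntS {y : 𝓞 K | y ≠ 0 ∧ ∃ P ∉ Q, y ∈ P.1 ^ 2} Y ≤
      C * Y ^ (Module.finrank ℚ K) * (∑' P, gI (K := K) P - ∑ P ∈ Q, gI P) := by
    have hfin := cntS_finite {y : 𝓞 K | y ≠ 0 ∧ ∃ P ∉ Q, y ∈ P.1 ^ 2} Y
    have hch : ∀ y ∈ {y : 𝓞 K | y ∈ {y : 𝓞 K | y ≠ 0 ∧ ∃ P ∉ Q, y ∈ P.1 ^ 2} ∧ house (y : K) ≤ Y},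
        ∃ P : PrimeIdl K, P ∉ Q ∧ y ∈ P.1 ^ 2 := fun y hy => hy.1.2
    rcases isEmpty_or_nonempty (PrimeIdl K) with hemp | hnonemp
    · have h1 : {y : 𝓞 K | y ∈ {y : 𝓞 K | y ≠ 0 ∧ ∃ P ∉ Q, y ∈ P.1 ^ 2} ∧ house (y : K) ≤ Y} = ∅ := by
        ext y
        simp only [Set.mem_empty_iff_false, iff_false]
        intro hy
        obtain ⟨P, -⟩ := hch y hy
        exact hemp.false P
      rw [cntS, h1]
      have h2 : Q = ∅ := Finset.eq_empty_of_isEmpty Q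
      simp [h2]
    choose! p hp using hch
    set F := hfin.toFinset.image p with hF
    have hdisj : Disjoint F Q := by
      rw [Finset.disjoint_left]
      intro P hP
      obtain ⟨y, hy, rfl⟩ := Finset.mem_image.mp hP
      exact (hp y (hfin.mem_toFinset.mp hy)).1
    calc _ ≤ cntS {y : 𝓞 K | ∃ P ∈ F, y ∈ {y : 𝓞 K | y ∈ P.1 ^ 2 ∧ y ≠ 0}} Y := by
          unfold cntS
          have := Set.ncard_le_ncard (s := {y : 𝓞 K | y ∈ {y : 𝓞 K | y ≠ 0 ∧ ∃ P ∉ Q, y ∈ P.1 ^ 2} ∧ house (y : K) ≤ Y})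
            (t := {y : 𝓞 K | y ∈ {y : 𝓞 K | ∃ P ∈ F, y ∈ {y : 𝓞 K | y ∈ P.1 ^ 2 ∧ y ≠ 0}} ∧ house (y : K) ≤ Y})
            (fun y hy => ⟨⟨p y, Finset.mem_image_of_mem p (hfin.mem_toFinset.mpr hy), (hp y hy).2, hy.1.1⟩, hy.2⟩)
            (cntS_finite _ _)
          exact_mod_cast this
      _ ≤ ∑ P ∈ F, cntS {y : 𝓞 K | y ∈ P.1 ^ 2 ∧ y ≠ 0} Y := cntS_biUnion F _ Y
      _ ≤ ∑ P ∈ F, C * Y ^ (Module.finrank ℚ K) * gI P := by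
          refine Finset.sum_le_sum fun P _ => ?_
          refine (h _ (pow_ne_zero 2 P.2.2) Y hY).trans (le_of_eq ?_)
          rw [gI, map_pow]; push_cast; ring
      _ = C * Y ^ (Module.finrank ℚ K) * ∑ P ∈ F, gI P := by rw [Finset.mul_sum]
      _ ≤ _ := by
          have hYp : 0 < Y := by linarith
          refine mul_le_mul_of_nonneg_left ?_ (by positivity)
          rw [le_sub_iff_add_le, ← Finset.sum_union hdisj]
          exact summable_gI.sum_le_tsum _ fun P _ => gI_nonneg P
  linarith

theorem sieve_limit (S : ResidueSieve K) (T : Finset (𝓞 K))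
    (hT : ∀ P : PrimeIdl K, ∀ x : 𝓞 K, S.Mem P x → ∃ t ∈ T, x - t ∈ P.1 ^ 2)
    (hm : Multipliable (fun P : PrimeIdl K => 1 - S.meas P.1)) :
    Tendsto (fun X : ℝ => cntS S.V X / cntS (Set.univ : Set (𝓞 K)) X) atTop
      (𝓝 (∏' P : PrimeIdl K, (1 - S.meas P.1))) := by
  obtain ⟨C, Y₀, hC, hY₀, htail⟩ := tail_bound K
  obtain ⟨c, hc, hasym⟩ := cntS_univ_asymp K
  set n := Module.finrank ℚ K with hn
  let ε : Finset (PrimeIdl K) → ℝ := fun Q => ∑' P, gI (K := K) P - ∑ P ∈ Q, gI P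
  have hε : Tendsto ε atTop (𝓝 0) := by
    have : Tendsto (fun Q : Finset (PrimeIdl K) => ∑ P ∈ Q, gI P) atTop (𝓝 (∑' P, gI (K := K) P)) :=
      summable_gI.hasSum
    simpa [ε] using this.const_sub (∑' P, gI (K := K) P)
  let a : Finset (PrimeIdl K) → ℝ → ℝ := fun Q X =>
    cntS {x : 𝓞 K | ∀ P ∈ Q, ¬ S.Mem P.1 x} X / cntS (Set.univ : Set (𝓞 K)) X
  let b : Finset (PrimeIdl K) → ℝ → ℝ := fun Q X =>
    (∑ t ∈ T, (1 + C * (X + house (t : K)) ^ n * ε Q)) / cntS (Set.univ : Set (𝓞 K)) X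
  have hinv : Tendsto (fun X : ℝ => X ^ n / cntS (Set.univ : Set (𝓞 K)) X) atTop (𝓝 c⁻¹) := by
    refine (hasym.inv₀ hc.ne').congr fun X => ?_
    rw [inv_div]
  have hinv0 : Tendsto (fun X : ℝ => 1 / cntS (Set.univ : Set (𝓞 K)) X) atTop (𝓝 0) := by
    have h1 : Tendsto (fun X : ℝ => (X ^ n)⁻¹) atTop (𝓝 0) :=
      (tendsto_pow_atTop (α := ℝ) (Module.finrank_pos (R := ℚ) (M := K)).ne').inv_tendsto_atTop
    have h2 := h1.mul hinv
    rw [zero_mul] at h2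
    refine h2.congr' ?_
    filter_upwards [eventually_gt_atTop 0] with X hX
    field_simp
  have hb : ∀ Q, Tendsto (b Q) atTop (𝓝 (T.card * (C / c) * ε Q)) := by
    intro Q
    have h1 : ∀ t ∈ T, Tendsto (fun X : ℝ => (1 + C * (X + house (t : K)) ^ n * ε Q) / cntS (Set.univ : Set (𝓞 K)) X)
        atTop (𝓝 (C / c * ε Q)) := by
      intro t _
      have h2 := hinv0.add ((((tendsto_shift_ratio (house (t : K)) n).mul hinv).const_mul C).mul_const (ε Q))
      rw [zero_add, one_mul, ← div_eq_mul_inv] at h2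
      refine h2.congr' ?_
      filter_upwards [eventually_gt_atTop 0] with X hX
      have := cntS_univ_pos (K := K) hX.le
      field_simp
    have h3 := tendsto_finsetSum T h1
    rw [Finset.sum_const, nsmul_eq_mul, ← mul_assoc] at h3
    refine h3.congr fun X => ?_
    simp only [b]
    rw [Finset.sum_div]
  have hup : ∀ Q X, cntS S.V X / cntS (Set.univ : Set (𝓞 K)) X ≤ a Q X := by
    intro Q X
    refine div_le_div_of_nonneg_right (cntS_mono ?_ le_rfl) (cntS_nonneg _ _)
    intro x hx P _
    exact hx P.1 P.2.1 P.2.2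
  have hlo : ∀ Q X, Y₀ ≤ X → a Q X - b Q X ≤ cntS S.V X / cntS (Set.univ : Set (𝓞 K)) X := by
    intro Q X hX
    simp only [a, b]
    rw [← sub_div]
    refine div_le_div_of_nonneg_right ?_ (cntS_nonneg _ _)
    rw [sub_le_iff_le_add]
    calc _ ≤ cntS (S.V ∪ {x | ∃ t ∈ T, x ∈ {x : 𝓞 K | ∃ P ∉ Q, x - t ∈ P.1 ^ 2}}) X := by
          refine cntS_mono ?_ le_rfl
          intro x hx
          by_cases hV : x ∈ S.V
          · exact Or.inl hV
          · right
            simp only [ResidueSieve.V, Set.mem_ofPred_eq, not_forall, not_not] at hV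
            obtain ⟨P, h1, h2, h3⟩ := hV
            obtain ⟨t, ht, h⟩ := hT ⟨P, h1, h2⟩ x h3
            exact ⟨t, ht, ⟨P, h1, h2⟩, fun hQ => hx _ hQ h3, h⟩
      _ ≤ _ := cntS_union _ _ _
      _ ≤ _ := by
          gcongr
          refine (cntS_biUnion T _ X).trans (Finset.sum_le_sum fun t _ => htail Q t X hX)
  have hprod : Tendsto (fun Q : Finset (PrimeIdl K) => ∏ P ∈ Q, (1 - S.meas P.1)) atTop
      (𝓝 (∏' P : PrimeIdl K, (1 - S.meas P.1))) := hm.hasProd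
  rw [tendsto_order]
  constructor
  · intro r hr
    have h1 := hprod.sub (hε.const_mul (T.card * (C / c)))
    rw [mul_zero, sub_zero] at h1
    obtain ⟨Q, hQ⟩ := (h1.eventually (lt_mem_nhds hr)).exists
    filter_upwards [((finite_density S Q).sub (hb Q)).eventually (lt_mem_nhds hQ), eventually_ge_atTop Y₀] with X hX hX2
    exact hX.trans_le (hlo Q X hX2)
  · intro r hr
    obtain ⟨Q, hQ⟩ := (hprod.eventually (gt_mem_nhds hr)).exists
    filter_upwards [(finite_density S Q).eventually (gt_mem_nhds hQ)] with X hX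
    exact (hup Q X).trans_lt hX

end main

/-- Density of the sifted set: under the assumptions of the strong approximation
theorem for sieves, the density of `V(K,R)` in `𝓞 K` (with respect to the house norm)
exists and equals the convergent infinite product `∏_𝔭 (1 − meas R_𝔭)`, which is
strictly positive. -/
theorem sieve_density {K : Type*} [Field K] [NumberField K]
    (S : ResidueSieve K) (T : Finset (𝓞 K))
    (hT : ∀ P : Ideal (𝓞 K), P.IsPrime → P ≠ ⊥ →
      ∀ x : 𝓞 K, S.Mem P x → ∃ t ∈ T, x - t ∈ P ^ 2)
    (hne : ∀ P : Ideal (𝓞 K), P.IsPrime → P ≠ ⊥ → S.R P ≠ Set.univ) :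
    Multipliable (fun P : {P : Ideal (𝓞 K) // P.IsPrime ∧ P ≠ ⊥} => 1 - S.meas P.1) ∧
    0 < (∏' P : {P : Ideal (𝓞 K) // P.IsPrime ∧ P ≠ ⊥}, (1 - S.meas P.1)) ∧
    Filter.Tendsto
      (fun X : ℝ =>
        (Nat.card {x : 𝓞 K // x ∈ S.V ∧ house (x : K) ≤ X} : ℝ) /
        (Nat.card {x : 𝓞 K // house (x : K) ≤ X} : ℝ))
      Filter.atTop
      (nhds (∏' P : {P : Ideal (𝓞 K) // P.IsPrime ∧ P ≠ ⊥}, (1 - S.meas P.1))) := by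
  have hT' : ∀ P : PrimeIdl K, ∀ x : 𝓞 K, S.Mem P x → ∃ t ∈ T, x - t ∈ P.1 ^ 2 :=
    fun P => hT P.1 P.2.1 P.2.2
  have hsum : Summable (fun P : PrimeIdl K => S.meas P.1) :=
    Summable.of_nonneg_of_le (fun P => meas_nonneg S P.1) (fun P => meas_le S T P (hT' P))
      (summable_gI.mul_left _)
  have hpos : ∀ P : PrimeIdl K, 0 < 1 - S.meas P.1 := fun P => one_sub_meas_pos S P (hne P.1 P.2.1 P.2.2)
  have hlog : Summable (fun P : PrimeIdl K => Real.log (1 - S.meas P.1)) := by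
    simpa [sub_eq_add_neg] using Real.summable_log_one_add_of_summable hsum.neg
  have hm : Multipliable (fun P : PrimeIdl K => 1 - S.meas P.1) :=
    Real.multipliable_of_summable_log hpos hlog
  refine ⟨hm, ?_, ?_⟩
  · rw [← Real.rexp_tsum_eq_tprod hpos hlog]
    exact Real.exp_pos _
  · refine (sieve_limit S T hT' hm).congr fun X => ?_
    simp only [cntS, Set.mem_univ, true_and]
    rfl
end

section
/- Let K be a number field of degree n over ℚ and let k ≥ 2 be an integer. Then there exists a constant C > 0 such that for all real numbers X, M ≥ 1: #{x ∈ 𝓞_K : ‖x‖ ≤ X and there exists a nonzero ideal 𝔞 of 𝓞_K with N(𝔞) > M and x ∈ 𝔞^k} ≤ C·(1 + X^n / M^{k−1}). -/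
open NumberField

section aux

variable {K : Type*} [Field K] [NumberField K]

lemma aux_coord :
    ∃ b : Module.Basis (K →+* ℂ) ℤ (𝓞 K), ∃ A : ℝ, 0 < A ∧ ∀ (x : 𝓞 K) (i : K →+* ℂ),
      |((b.repr x i : ℤ) : ℝ)| ≤ A * house (x : K) := by
  classical
  have key : ∃ A : ℝ, ∀ (x : 𝓞 K) (i : K →+* ℂ),
      ‖(((integralBasis K).reindex (equivReindex K).symm).repr x i : ℂ)‖ ≤
      A * house (algebraMap (𝓞 K) K x) :=
    ⟨_, fun x i => house.basis_repr_norm_le_const_mul_house K x i⟩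
  obtain ⟨A, hA⟩ := key
  refine ⟨(RingOfIntegers.basis K).reindex (equivReindex K).symm, max A 1, by positivity, ?_⟩
  intro x i
  have h := hA x i
  have h0 := house_nonneg (x : K)
  have h2 : |((((RingOfIntegers.basis K).reindex (equivReindex K).symm).repr x i : ℤ) : ℝ)|
      ≤ A * house (x : K) := by
    refine le_trans (le_of_eq ?_) h
    rw [Module.Basis.repr_reindex_apply, Module.Basis.repr_reindex_apply,
      integralBasis_repr_apply]
    simp
  refine h2.trans ?_
  gcongr
  exact le_max_left _ _

lemma aux_house (b : Module.Basis (K →+* ℂ) ℤ (𝓞 K)) :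
    ∃ A : ℝ, 0 < A ∧ ∀ (x : 𝓞 K) (s : ℝ), (∀ i, |((b.repr x i : ℤ) : ℝ)| ≤ s) →
      house (x : K) ≤ A * s := by
  refine ⟨1 + ∑ i, house (b i : K), ?_, ?_⟩
  · have : 0 ≤ ∑ i, house (b i : K) := Finset.sum_nonneg fun i _ => house_nonneg _
    linarith
  · intro x s hs
    have hs0 : 0 ≤ s := (abs_nonneg _).trans (hs (Classical.arbitrary _))
    have hx : (x : K) = ∑ i, ((b.repr x i : ℤ) : K) * (b i : K) := by
      conv_lhs => rw [← b.sum_repr x]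
      simp [map_sum]
    have h1 : house (x : K) ≤ ∑ i, s * house (b i : K) := by
      rw [hx]
      refine (house_sum_le_sum_house _ _).trans (Finset.sum_le_sum fun i _ => ?_)
      refine (house_mul_le _ _).trans ?_
      rw [house_intCast]
      have := hs i
      have h0 := house_nonneg (b i : K)
      push_cast
      gcongr
    rw [← Finset.mul_sum] at h1
    nlinarith

lemma aux_norm (I : Ideal (𝓞 K)) (x : 𝓞 K) (hx : x ≠ 0) (hxI : x ∈ I) :
    (Ideal.absNorm I : ℝ) ≤ house (x : K) ^ (Module.finrank ℚ K) := by
  have hd := Ideal.absNorm_dvd_absNorm_of_le ((Ideal.span_singleton_le_iff_mem I).2 hxI)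
  rw [Ideal.absNorm_span_singleton] at hd
  have hne : (Algebra.norm ℤ x).natAbs ≠ 0 := by
    simpa [Algebra.norm_eq_zero_iff] using hx
  have hle := Nat.le_of_dvd (Nat.pos_of_ne_zero hne) hd
  have h1 : (Ideal.absNorm I : ℝ) ≤ ‖Algebra.norm ℚ (x : K)‖ := by
    rw [← Algebra.coe_norm_int]
    have : (Ideal.absNorm I : ℝ) ≤ ((Algebra.norm ℤ x).natAbs : ℝ) := by exact_mod_cast hle
    refine this.trans (le_of_eq ?_)
    rw [Nat.cast_natAbs, ← Rat.norm_cast_real]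
    simp
  let σ : K →+* ℂ := Classical.arbitrary _
  refine h1.trans ((norm_norm_le_norm_mul_house_pow (x : K) σ).trans ?_)
  have hpos : 0 < Module.finrank ℚ K := Module.finrank_pos
  have h0 := house_nonneg (x : K)
  calc _ ≤ house (x : K) * house (x : K) ^ (Module.finrank ℚ K - 1) := by
        gcongr
        exact norm_embedding_le_house _ _
    _ = _ := by
        rw [← pow_succ']
        congr 1
        omega

lemma aux_floor (s T c : ℝ) (h : |c| ≤ T * s) (hs : 0 < s) :
    ⌊c / s⌋ ∈ Finset.Icc ⌊-T⌋ ⌊T⌋ := by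
  rw [abs_le] at h
  rw [Finset.mem_Icc]
  constructor
  · apply Int.floor_le_floor
    rw [le_div_iff₀ hs]; linarith
  · apply Int.floor_le_floor
    rw [div_le_iff₀ hs]; linarith

lemma aux_card (T : ℝ) (hT : 0 ≤ T) : ((Finset.Icc ⌊-T⌋ ⌊T⌋).card : ℝ) ≤ 2 * T + 2 := by
  rw [Int.card_Icc]
  have h1 := Int.floor_le T
  have h2 := Int.lt_floor_add_one (-T)
  have h3 : ⌊-T⌋ ≤ ⌊T⌋ := Int.floor_le_floor (by linarith)
  have h4 : (((⌊T⌋ + 1 - ⌊-T⌋).toNat : ℤ) : ℝ) = ((⌊T⌋ + 1 - ⌊-T⌋ : ℤ) : ℝ) := by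
    rw [Int.toNat_of_nonneg (by omega)]
  rw [Int.cast_natCast] at h4
  rw [h4]
  push_cast
  linarith

variable (K) in
lemma aux_pack :
    ∃ C : ℝ, 0 < C ∧ ∀ (I : Ideal (𝓞 K)) (X : ℝ), I ≠ ⊥ → 0 < X →
      (Ideal.absNorm I : ℝ) ≤ X ^ (Module.finrank ℚ K) →
      {x : 𝓞 K | x ∈ I ∧ house (x : K) ≤ X}.Finite ∧
      ({x : 𝓞 K | x ∈ I ∧ house (x : K) ≤ X}.ncard : ℝ) ≤
        C * (X ^ (Module.finrank ℚ K) / Ideal.absNorm I) := by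
  classical
  obtain ⟨b, A₁, hA₁, hb⟩ := aux_coord (K := K)
  obtain ⟨A₂, hA₂, hh⟩ := aux_house b
  refine ⟨(4 * A₁ * A₂ + 2) ^ (Module.finrank ℚ K), by positivity, ?_⟩
  intro I X hI hX hIX
  set n := Module.finrank ℚ K with hn
  have hn0 : n ≠ 0 := (Module.finrank_pos (R := ℚ) (M := K)).ne'
  have hNpos : (0 : ℝ) < Ideal.absNorm I := by
    have : Ideal.absNorm I ≠ 0 := by simpa [Ideal.absNorm_eq_zero_iff] using hI
    positivity
  obtain ⟨β, hβ, hβn⟩ : ∃ β : ℝ, 0 < β ∧ β ^ n = Ideal.absNorm I :=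
    ⟨(Ideal.absNorm I : ℝ) ^ ((n : ℝ)⁻¹), by positivity,
      Real.rpow_inv_natCast_pow hNpos.le hn0⟩
  have hβX : β ≤ X := by
    rw [← hβn] at hIX
    exact le_of_pow_le_pow_left₀ hn0 hX.le hIX
  set s := β / (2 * A₂) with hs
  have hspos : 0 < s := by positivity
  set T := 2 * A₁ * A₂ * (X / β) with hT
  have hT0 : 0 ≤ T := by positivity
  let F : Finset ((K →+* ℂ) → ℤ) := Fintype.piFinset fun _ => Finset.Icc ⌊-T⌋ ⌊T⌋
  let f : 𝓞 K → ((K →+* ℂ) → ℤ) := fun x i => ⌊((b.repr x i : ℤ) : ℝ) / s⌋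
  have hTs : T * s = A₁ * X := by
    rw [hT, hs]; field_simp
  have hmaps : Set.MapsTo f {x : 𝓞 K | x ∈ I ∧ house (x : K) ≤ X} (F : Set _) := by
    rintro x ⟨-, hx⟩
    simp only [F, Finset.mem_coe, Fintype.mem_piFinset]
    intro i
    apply aux_floor _ _ _ _ hspos
    rw [hTs]
    refine (hb x i).trans ?_
    gcongr
  have hinj : Set.InjOn f {x : 𝓞 K | x ∈ I ∧ house (x : K) ≤ X} := by
    rintro x ⟨hx, -⟩ y ⟨hy, -⟩ hxy
    by_contra hne
    have h1 := aux_norm I (x - y) (sub_ne_zero.2 hne) (I.sub_mem hx hy)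
    have h2 : house ((x - y : 𝓞 K) : K) ≤ A₂ * s := by
      apply hh
      intro i
      have h3 := Int.abs_sub_lt_one_of_floor_eq_floor (congrFun hxy i)
      rw [← sub_div, abs_div, abs_of_pos hspos, div_lt_one hspos] at h3
      simp only [map_sub, Finsupp.sub_apply, Int.cast_sub]
      exact h3.le
    have h4 : A₂ * s < β := by
      have : A₂ * s = β / 2 := by rw [hs]; field_simp
      linarith
    have h5 : house ((x - y : 𝓞 K) : K) ^ n < β ^ n :=
      pow_lt_pow_left₀ (h2.trans_lt h4) (house_nonneg _) hn0
    rw [hβn] at h5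
    exact absurd h1 (not_le.2 h5)
  refine ⟨Set.Finite.of_injOn hmaps hinj F.finite_toSet, ?_⟩
  have hcard := Set.ncard_le_ncard_of_injOn f hmaps hinj F.finite_toSet
  rw [Set.ncard_coe_finset] at hcard
  have hF : F.card = (Finset.Icc ⌊-T⌋ ⌊T⌋).card ^ n := by
    simp [F, Fintype.card_piFinset, Embeddings.card, hn]
  calc _ ≤ (F.card : ℝ) := by exact_mod_cast hcard
    _ = ((Finset.Icc ⌊-T⌋ ⌊T⌋).card : ℝ) ^ n := by rw [hF]; push_cast; rfl
    _ ≤ (2 * T + 2) ^ n := by gcongr; exact aux_card T hT0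
    _ ≤ ((4 * A₁ * A₂ + 2) * (X / β)) ^ n := by
        have : 1 ≤ X / β := by rw [one_le_div hβ]; exact hβX
        gcongr
        rw [hT]; nlinarith
    _ = _ := by rw [mul_pow, div_pow, hβn]

lemma aux_fin (T : ℝ) : {I : Ideal (𝓞 K) | (Ideal.absNorm I : ℝ) ≤ T}.Finite := by
  refine (Ideal.finite_setOfPred_absNorm_le (S := 𝓞 K) ⌊T⌋₊).subset ?_
  intro I hI
  exact Nat.le_floor hI

variable (K) in
lemma aux_count :
    ∃ A : ℝ, 0 < A ∧ ∀ T : ℝ, 1 ≤ T →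
      ({I : Ideal (𝓞 K) | (Ideal.absNorm I : ℝ) ≤ T}.ncard : ℝ) ≤ A * T := by
  have h := (NumberField.Ideal.tendsto_norm_le_div_atTop K).eventually_le_const (lt_add_one _)
  obtain ⟨T₀, hT₀⟩ := Filter.eventually_atTop.1 h
  set L := (2 ^ InfinitePlace.nrRealPlaces K * (2 * Real.pi) ^ InfinitePlace.nrComplexPlaces K * Units.regulator K * classNumber K) /
        (Units.torsionOrder K * Real.sqrt |discr K|) + 1
  set D : ℝ := ({I : Ideal (𝓞 K) | (Ideal.absNorm I : ℝ) ≤ T₀}.ncard : ℝ)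
  have hD : 0 ≤ D := Nat.cast_nonneg _
  refine ⟨|L| + D + 1, by positivity, fun T hT => ?_⟩
  rcases le_total T₀ T with h1 | h1
  · have h2 := hT₀ T h1
    rw [div_le_iff₀ (by linarith)] at h2
    have h3 := le_abs_self L
    have h4 : ({I : Ideal (𝓞 K) | (Ideal.absNorm I : ℝ) ≤ T}.ncard : ℝ) ≤ L * T := h2
    nlinarith
  · have h2 : ({I : Ideal (𝓞 K) | (Ideal.absNorm I : ℝ) ≤ T}.ncard : ℝ) ≤ D := by
      apply Nat.cast_le.2
      exact Set.ncard_le_ncard (fun I hI => le_trans hI h1) (aux_fin T₀)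
    have := abs_nonneg L
    nlinarith

lemma aux_dyadic (A : ℝ) (hA : 0 < A) (hcount : ∀ T : ℝ, 1 ≤ T →
      ({I : Ideal (𝓞 K) | (Ideal.absNorm I : ℝ) ≤ T}.ncard : ℝ) ≤ A * T) (m : ℕ) (J : ℕ) :
    ∀ (M : ℝ), 1 ≤ M → ∀ S : Finset (Ideal (𝓞 K)),
      (∀ a ∈ S, M < (Ideal.absNorm a : ℝ) ∧ (Ideal.absNorm a : ℝ) ≤ 2 ^ J * M) →
      ∑ a ∈ S, 1 / (Ideal.absNorm a : ℝ) ^ (m + 2) ≤ 4 * A / M ^ (m + 1) := by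
  classical
  induction J with
  | zero =>
    intro M hM S hS
    have : S = ∅ := by
      rw [Finset.eq_empty_iff_forall_notMem]
      intro a ha
      have := hS a ha
      simp only [pow_zero, one_mul] at this
      linarith
    rw [this, Finset.sum_empty]
    positivity
  | succ J ih =>
    intro M hM S hS
    have hM0 : 0 < M := by linarith
    rw [← Finset.sum_filter_add_sum_filter_not S (fun a => (Ideal.absNorm a : ℝ) ≤ 2 * M)]
    have h1 : ∑ a ∈ S with (Ideal.absNorm a : ℝ) ≤ 2 * M, 1 / (Ideal.absNorm a : ℝ) ^ (m + 2)
        ≤ 2 * A / M ^ (m + 1) := by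
      have hc : ((S.filter fun a => (Ideal.absNorm a : ℝ) ≤ 2 * M).card : ℝ) ≤ A * (2 * M) := by
        refine le_trans ?_ (hcount (2 * M) (by linarith))
        rw [← Set.ncard_coe_finset]
        apply Nat.cast_le.2
        refine Set.ncard_le_ncard (fun I hI => ?_) (aux_fin _)
        exact (Finset.mem_filter.1 (Finset.mem_coe.1 hI)).2
      calc _ ≤ ∑ a ∈ S with (Ideal.absNorm a : ℝ) ≤ 2 * M, 1 / M ^ (m + 2) := by
            refine Finset.sum_le_sum fun a ha => ?_
            have := (hS a (Finset.mem_filter.1 ha).1).1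
            gcongr
        _ = ((S.filter fun a => (Ideal.absNorm a : ℝ) ≤ 2 * M).card : ℝ) * (1 / M ^ (m + 2)) := by
            rw [Finset.sum_const, nsmul_eq_mul]
        _ ≤ (A * (2 * M)) * (1 / M ^ (m + 2)) := by gcongr
        _ = _ := by field_simp; ring
    have h2 := ih (2 * M) (by linarith) (S.filter fun a => ¬ (Ideal.absNorm a : ℝ) ≤ 2 * M) (by
      intro a ha
      rw [Finset.mem_filter] at ha
      refine ⟨not_le.1 ha.2, (hS a ha.1).2.trans (le_of_eq ?_)⟩
      ring)
    have h3 : 4 * A / (2 * M) ^ (m + 1) ≤ 2 * A / M ^ (m + 1) := by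
      rw [mul_pow, div_le_div_iff₀ (by positivity) (by positivity)]
      have : (1 : ℝ) ≤ 2 ^ m := one_le_pow₀ (by norm_num)
      have hp : 0 < A * M ^ (m + 1) := by positivity
      rw [pow_succ 2 m]
      nlinarith
    have h4 : 4 * A / M ^ (m + 1) = 2 * A / M ^ (m + 1) + 2 * A / M ^ (m + 1) := by ring
    linarith

end aux

/-- Tail estimate: the number of integers of house norm at most `X` divisible by the
`k`-th power of some ideal of norm larger than `M` is `O(1 + Xⁿ/M^{k−1})`,
uniformly in `X, M ≥ 1`. -/
theorem tail_estimate {K : Type*} [Field K] [NumberField K] (n k : ℕ)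
    (hn : Module.finrank ℚ K = n) (hk : 2 ≤ k) :
    ∃ C : ℝ, 0 < C ∧ ∀ X M : ℝ, 1 ≤ X → 1 ≤ M →
      (Nat.card {x : 𝓞 K // house (x : K) ≤ X ∧
          ∃ a : Ideal (𝓞 K), a ≠ ⊥ ∧ M < (Ideal.absNorm a : ℝ) ∧ x ∈ a ^ k} : ℝ)
        ≤ C * (1 + X ^ n / M ^ (k - 1)) := by
  classical
  obtain ⟨m, rfl⟩ : ∃ m, k = m + 2 := ⟨k - 2, by omega⟩
  obtain ⟨P, hP, hpack⟩ := aux_pack K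
  obtain ⟨A, hA, hcount⟩ := aux_count K
  rw [hn] at hpack
  refine ⟨1 + P * (4 * A), by positivity, fun X M hX hM => ?_⟩
  have hM0 : 0 < M := by linarith
  have hX0 : 0 < X := by linarith
  have hSfin : {a : Ideal (𝓞 K) | M < (Ideal.absNorm a : ℝ) ∧
      (Ideal.absNorm a : ℝ) ^ (m + 2) ≤ X ^ n}.Finite := by
    refine (aux_fin (K := K) (X ^ n)).subset ?_
    rintro a ⟨h1, h2⟩
    exact (le_self_pow₀ (by linarith) (by omega)).trans h2
  set S := hSfin.toFinset with hS
  have hmemS : ∀ a, a ∈ S ↔ M < (Ideal.absNorm a : ℝ) ∧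
      (Ideal.absNorm a : ℝ) ^ (m + 2) ≤ X ^ n := by
    intro a; simp [hS]
  have hSp : ∀ a ∈ S, {x : 𝓞 K | x ∈ a ^ (m + 2) ∧ house (x : K) ≤ X}.Finite ∧
      ({x : 𝓞 K | x ∈ a ^ (m + 2) ∧ house (x : K) ≤ X}.ncard : ℝ) ≤
        P * (X ^ n / (Ideal.absNorm a : ℝ) ^ (m + 2)) := by
    intro a ha
    obtain ⟨h1, h2⟩ := (hmemS a).1 ha
    have hane : a ≠ ⊥ := by
      rintro rfl
      simp at h1
      linarith
    have := hpack (a ^ (m + 2)) X (pow_ne_zero _ hane) hX0 (by rw [map_pow]; push_cast; exact h2)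
    rw [map_pow] at this
    push_cast at this
    exact this
  have hsub : {x : 𝓞 K | house (x : K) ≤ X ∧
          ∃ a : Ideal (𝓞 K), a ≠ ⊥ ∧ M < (Ideal.absNorm a : ℝ) ∧ x ∈ a ^ (m + 2)} ⊆
      {0} ∪ ⋃ a ∈ S, {x : 𝓞 K | x ∈ a ^ (m + 2) ∧ house (x : K) ≤ X} := by
    rintro x ⟨hx, a, ha, hMa, hxa⟩
    by_cases h0 : x = 0
    · left; exact h0
    · right
      simp only [Set.mem_iUnion]
      refine ⟨a, (hmemS a).2 ⟨hMa, ?_⟩, hxa, hx⟩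
      have := aux_norm _ x h0 hxa
      rw [map_pow, hn] at this
      push_cast at this
      exact this.trans (pow_le_pow_left₀ (house_nonneg _) hx n)
  have hUfin : (⋃ a ∈ S, {x : 𝓞 K | x ∈ a ^ (m + 2) ∧ house (x : K) ≤ X}).Finite :=
    S.finite_toSet.biUnion fun a ha => (hSp a ha).1
  have hsum : ∑ a ∈ S, 1 / (Ideal.absNorm a : ℝ) ^ (m + 2) ≤ 4 * A / M ^ (m + 1) := by
    obtain ⟨J, hJ⟩ := pow_unbounded_of_one_lt (X ^ n) (one_lt_two (α := ℝ))
    refine aux_dyadic A hA hcount m J M hM S fun a ha => ?_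
    obtain ⟨h1, h2⟩ := (hmemS a).1 ha
    refine ⟨h1, ?_⟩
    have h3 : (Ideal.absNorm a : ℝ) ≤ X ^ n :=
      (le_self_pow₀ (by linarith) (by omega)).trans h2
    have h4 : (0 : ℝ) < 2 ^ J := by positivity
    nlinarith
  have hbU : (⋃ a ∈ S, {x : 𝓞 K | x ∈ a ^ (m + 2) ∧ house (x : K) ≤ X}).ncard ≤
      ∑ a ∈ S, {x : 𝓞 K | x ∈ a ^ (m + 2) ∧ house (x : K) ≤ X}.ncard :=
    Finset.set_ncard_biUnion_le _ _
  have h1 : (Nat.card {x : 𝓞 K // house (x : K) ≤ X ∧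
          ∃ a : Ideal (𝓞 K), a ≠ ⊥ ∧ M < (Ideal.absNorm a : ℝ) ∧ x ∈ a ^ (m + 2)}) ≤
      1 + ∑ a ∈ S, {x : 𝓞 K | x ∈ a ^ (m + 2) ∧ house (x : K) ≤ X}.ncard := by
    refine (Set.ncard_le_ncard hsub ((Set.finite_singleton _).union hUfin)).trans ?_
    refine (Set.ncard_union_le _ _).trans ?_
    rw [Set.ncard_singleton]
    omega
  have h2 : m + 2 - 1 = m + 1 := by omega
  rw [h2]
  have hQ : 0 ≤ X ^ n / M ^ (m + 1) := by positivity
  calc _ ≤ 1 + ∑ a ∈ S, ({x : 𝓞 K | x ∈ a ^ (m + 2) ∧ house (x : K) ≤ X}.ncard : ℝ) := by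
        exact_mod_cast h1
    _ ≤ 1 + ∑ a ∈ S, P * (X ^ n / (Ideal.absNorm a : ℝ) ^ (m + 2)) := by
        gcongr with a ha
        exact (hSp a ha).2
    _ = 1 + P * X ^ n * ∑ a ∈ S, 1 / (Ideal.absNorm a : ℝ) ^ (m + 2) := by
        rw [Finset.mul_sum]
        congr 1
        refine Finset.sum_congr rfl fun a _ => ?_
        ring
    _ ≤ 1 + P * X ^ n * (4 * A / M ^ (m + 1)) := by gcongr
    _ = 1 + P * (4 * A) * (X ^ n / M ^ (m + 1)) := by ring
    _ ≤ _ := by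
        have : 0 < P * (4 * A) := by positivity
        nlinarith
end

section
/- Let n, m ≥ 0 be integers, let F be a field with at least 3 elements, and let A : F^n → F^m be an F-linear bijection. Then the following are equivalent: (a) for every x ∈ F^n all of whose coordinates are nonzero, all coordinates of A(x) are nonzero; (b) there exist an F-algebra homomorphism τ : F^n → F^m (where F^n and F^m carry the coordinatewise product F-algebra structure) and an element ε ∈ F^m with all coordinates nonzero such that A(x) = ε · τ(x) (coordinatewise product) for all x ∈ F^n. -/
theorem exists_avoid {F : Type*} [Field F] (hF : 3 ≤ Cardinal.mk F) (a b : F) :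
    ∃ y : F, y ≠ a ∧ y ≠ b := by
  classical
  by_contra! h
  have h1 : (Set.univ : Set F) ⊆ (({a, b} : Finset F) : Set F) := by
    intro y _
    by_cases hy : y = a
    · simp [hy]
    · simp [h y hy]
  have h2 := Cardinal.mk_le_mk_of_subset h1
  rw [Cardinal.mk_univ] at h2
  replace h2 := h2.trans_eq (Cardinal.mk_coe_finset (s := ({a, b} : Finset F)))
  have h3 : (3 : Cardinal) ≤ ((2 : ℕ) : Cardinal) :=
    hF.trans (h2.trans (by exact_mod_cast Finset.card_le_two))
  have h4 : 3 ≤ 2 := by exact_mod_cast h3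
  omega

theorem support_unique {F : Type*} [Field F] (hF : 3 ≤ Cardinal.mk F) {n : ℕ}
    (f : (Fin n → F) →ₗ[F] F) (hf : ∀ x : Fin n → F, (∀ i, x i ≠ 0) → f x ≠ 0)
    (p q : Fin n) (hp : f (Pi.single p 1) ≠ 0) (hq : f (Pi.single q 1) ≠ 0) : p = q := by
  by_contra hpq
  set s := f (1 - Pi.single p 1 - Pi.single q 1) with hs
  obtain ⟨y, hy0, hys⟩ := exists_avoid hF 0 (-s)
  have hz : -s - y ≠ 0 := fun h => hys (sub_eq_zero.mp h).symm
  refine hf ((1 - Pi.single p 1 - Pi.single q 1) + (y / f (Pi.single p 1)) • Pi.single p 1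
    + ((-s - y) / f (Pi.single q 1)) • Pi.single q 1) ?_ ?_
  · intro i
    by_cases hip : i = p
    · subst hip
      simp [Pi.single_apply, hpq, hy0, hp]
    · by_cases hiq : i = q
      · subst hiq
        simpa [Pi.single_apply, hip, hq] using hz
      · simp [Pi.single_apply, hip, hiq]
  · rw [map_add, map_add, map_smul, map_smul, ← hs, smul_eq_mul, smul_eq_mul,
      div_mul_cancel₀ _ hp, div_mul_cancel₀ _ hq]
    ring

theorem functional_form {F : Type*} [Field F] (hF : 3 ≤ Cardinal.mk F) {n : ℕ}
    (f : (Fin n → F) →ₗ[F] F) (hf : ∀ x : Fin n → F, (∀ i, x i ≠ 0) → f x ≠ 0) :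
    ∃ (p : Fin n) (c : F), c ≠ 0 ∧ ∀ x, f x = c * x p := by
  have hsum : ∀ x, f x = ∑ i, x i * f (Pi.single i 1) := by
    intro x
    conv_lhs => rw [pi_eq_sum_univ' x]
    simp [map_sum]
  have h1 : ∃ p, f (Pi.single p 1) ≠ 0 := by
    by_contra! h
    exact hf 1 (by simp) (by rw [hsum]; simp [h])
  obtain ⟨p, hp⟩ := h1
  refine ⟨p, _, hp, fun x => ?_⟩
  rw [hsum, Finset.sum_eq_single p, mul_comm]
  · intro b _ hb
    by_contra h
    exact hb (support_unique hF f hf b p (right_ne_zero_of_mul h) hp)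
  · simp

/-- Geometric lemma: over a field `F` with at least 3 elements, an `F`-linear bijection
`A : Fⁿ → Fᵐ` maps vectors with all coordinates nonzero to vectors with all
coordinates nonzero if and only if it is the composition of an `F`-algebra homomorphism
`Fⁿ → Fᵐ` with coordinatewise multiplication by a vector with nonzero coordinates. -/
theorem geometric_lemma (n m : ℕ) (F : Type*) [Field F] (hF : 3 ≤ Cardinal.mk F)
    (A : (Fin n → F) ≃ₗ[F] (Fin m → F)) :
    (∀ x : Fin n → F, (∀ i, x i ≠ 0) → ∀ j, A x j ≠ 0) ↔
      ∃ (τ : (Fin n → F) →ₐ[F] (Fin m → F)) (ε : Fin m → F),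
        (∀ j, ε j ≠ 0) ∧ ∀ x : Fin n → F, A x = ε * τ x := by
  constructor
  · intro h
    have key : ∀ j, ∃ (p : Fin n) (c : F), c ≠ 0 ∧ ∀ x, A x j = c * x p := fun j =>
      functional_form hF ((LinearMap.proj j).comp A.toLinearMap) (fun x hx => h x hx j)
    choose p c hc hA using key
    refine ⟨Pi.algHom F _ (fun j => Pi.evalAlgHom F (fun _ => F) (p j)), c, hc, fun x => ?_⟩
    ext j
    simp [hA]
  · rintro ⟨τ, ε, hε, hA⟩ x hx j
    have hu : x * (fun i => (x i)⁻¹) = 1 := by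
      ext i
      simp [hx i]
    have h2 := congrFun (congrArg τ hu) j
    rw [map_mul, map_one] at h2
    rw [hA]
    exact mul_ne_zero (hε j) (left_ne_zero_of_mul_eq_one h2)
end

section
/- Let K and L be finite-dimensional commutative ℚ-algebras, let F be a field of characteristic 0, and suppose there are F-algebra isomorphisms K ⊗_ℚ F ≅ F^n and L ⊗_ℚ F ≅ F^m (coordinatewise product algebras). Let A : K → L be a ℚ-linear map, and let A_F = A ⊗ id_F : K ⊗_ℚ F → L ⊗_ℚ F be its F-linear extension. If A_F maps every invertible element of K ⊗_ℚ F to an invertible element of L ⊗_ℚ F, then there exist a ℚ-algebra homomorphism τ : K → L and an invertible element ε ∈ L^× such that A(x) = ε·τ(x) for all x ∈ K. -/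
open scoped TensorProduct

theorem aux_functional {F : Type*} [Field F] [CharZero F] (n : ℕ) (φ : (Fin n → F) →ₗ[F] F)
    (h : ∀ v, IsUnit v → φ v ≠ 0) (v w : Fin n → F) : φ 1 * φ (v * w) = φ v * φ w := by
  have hφ : ∀ u, φ u = ∑ i, u i * φ (Pi.single i 1) := fun u => by
    conv_lhs => rw [pi_eq_sum_univ' u]
    simp only [map_sum, map_smul, smul_eq_mul]
  obtain ⟨i, hi⟩ : ∃ i, φ (Pi.single i 1) ≠ 0 := by
    by_contra! hc
    exact h 1 isUnit_one (by rw [hφ]; simp [hc])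
  have key : ∀ u : Fin n → F, (∀ k, u k ≠ 0) → φ u = u i * φ (Pi.single i 1) := by
    intro u hu
    by_contra hne
    set c := φ (Pi.single i 1) with hc
    set t : F := -(φ u - u i * c) / c with ht
    have ht0 : t ≠ 0 := div_ne_zero (neg_ne_zero.mpr (sub_ne_zero.mpr hne)) hi
    have hw : φ (u + (t - u i) • Pi.single i 1) = 0 := by
      rw [map_add, map_smul, smul_eq_mul, ← hc, ht]
      field_simp
      ring
    refine h _ ?_ hw
    rw [Pi.isUnit_iff]
    intro k
    rw [isUnit_iff_ne_zero]
    by_cases hk : k = i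
    · subst hk; simpa using ht0
    · simpa [hk] using hu k
  have hz : ∀ j, j ≠ i → φ (Pi.single j 1) = 0 := by
    intro j hj
    have h1 := key 1 (by simp)
    have h2 := key (1 + Pi.single j 1) (by
      intro k
      by_cases hk : k = j
      · subst hk; simp
      · simp [hk])
    rw [map_add, h1] at h2
    simpa [hj.symm] using h2
  have hall : ∀ u, φ u = u i * φ (Pi.single i 1) := fun u => by
    rw [hφ u]
    exact Finset.sum_eq_single i (fun j _ hj => by rw [hz j hj, mul_zero]) (by simp)
  rw [hall 1, hall (v * w), hall v, hall w]
  simp only [Pi.one_apply, Pi.mul_apply]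
  ring

/-- If `K`, `L` are finite-dimensional commutative ℚ-algebras that split completely
over a field `F` of characteristic 0 (i.e. `F ⊗[ℚ] K ≅ Fⁿ` and `F ⊗[ℚ] L ≅ Fᵐ` as
`F`-algebras), and the `F`-linear extension of a ℚ-linear map `A : K → L` maps
invertible elements to invertible elements, then `A(x) = ε·τ(x)` for a ℚ-algebra
homomorphism `τ : K → L` and a unit `ε ∈ L^×`. -/
theorem norm_implies_mult {K L F : Type*}
    [CommRing K] [Algebra ℚ K] [FiniteDimensional ℚ K]
    [CommRing L] [Algebra ℚ L] [FiniteDimensional ℚ L]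
    [Field F] [CharZero F] (n m : ℕ)
    (e₁ : (F ⊗[ℚ] K) ≃ₐ[F] (Fin n → F))
    (e₂ : (F ⊗[ℚ] L) ≃ₐ[F] (Fin m → F))
    (A : K →ₗ[ℚ] L)
    (hA : ∀ z : F ⊗[ℚ] K, IsUnit z → IsUnit (A.baseChange F z)) :
    ∃ (τ : K →ₐ[ℚ] L) (ε : Lˣ), ∀ x : K, A x = (ε : L) * τ x := by
  have hinj : Function.Injective (fun y : L => (1 : F) ⊗ₜ[ℚ] y) :=
    Algebra.TensorProduct.includeRight_injective (R := ℚ) (A := F) (B := L)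
      (algebraMap ℚ F).injective
  have hF : ∀ z w : F ⊗[ℚ] K,
      A.baseChange F 1 * A.baseChange F (z * w) = A.baseChange F z * A.baseChange F w := by
    intro z w
    apply e₂.injective
    funext j
    have := aux_functional n
      ((LinearMap.proj j : (Fin m → F) →ₗ[F] F) ∘ₗ e₂.toLinearMap ∘ₗ A.baseChange F ∘ₗ
        e₁.symm.toLinearMap) (by
        intro v hv
        have h1 := (hA _ (hv.map e₁.symm)).map e₂
        exact ((Pi.isUnit_iff.mp h1) j).ne_zero) (e₁ z) (e₁ w)
    rw [map_mul e₂, map_mul e₂, Pi.mul_apply, Pi.mul_apply]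
    simpa [← map_mul] using this
  have hmul : ∀ x y : K, A 1 * A (x * y) = A x * A y := by
    intro x y
    apply hinj
    have := hF (1 ⊗ₜ x) (1 ⊗ₜ y)
    simpa [Algebra.TensorProduct.one_def] using this
  have hu : IsUnit (A 1) := by
    have h1 : IsUnit ((1 : F) ⊗ₜ[ℚ] A 1) := by
      simpa [Algebra.TensorProduct.one_def] using hA 1 isUnit_one
    have hi : Function.Injective (LinearMap.mulLeft ℚ (A 1)) := by
      intro a b hab
      apply hinj
      apply h1.mul_left_cancel
      simpa using congrArg (fun y : L => (1 : F) ⊗ₜ[ℚ] y) hab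
    obtain ⟨b, hb⟩ := LinearMap.surjective_of_injective hi 1
    exact IsUnit.of_mul_eq_one b hb
  obtain ⟨ε, hε⟩ := hu
  refine ⟨AlgHom.ofLinearMap (LinearMap.mulLeft ℚ (↑ε⁻¹ : L) ∘ₗ A) ?_ ?_, ε, ?_⟩
  · simp [← hε]
  · intro x y
    have h := hmul x y
    rw [← hε] at h
    have h2 : A (x * y) = ↑ε⁻¹ * (A x * A y) := by rw [← h, Units.inv_mul_cancel_left]
    simp only [LinearMap.comp_apply, LinearMap.mulLeft_apply, h2]
    ring
  · intro x
    simp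
end

section
/- Let p be a prime number, let n ≥ 1, let μ be the Haar probability measure on ℤ_p (normalized so that μ(ℤ_p) = 1), let M be a ℤ_p-submodule of ℤ_p^n, and let R_1, …, R_n ⊆ ℤ_p be compact open subsets with ∑_{i=1}^n μ(R_i) < 1. If M contains an element all of whose coordinates lie in ℤ_p^×, then for every a ∈ ℤ_p^n there exists y ∈ a + M such that for every i, the i-th coordinate of y does not lie in R_i. -/
open MeasureTheory

lemma aux_upper (p : ℕ) [Fact p.Prime] [MeasurableSpace ℤ_[p]] (μ : Measure ℤ_[p])
    (hμ : ∀ (k : ℕ) (a : ℤ_[p]),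
      μ {x : ℤ_[p] | x - a ∈ Ideal.span {(p : ℤ_[p])} ^ k} = ((p : ENNReal) ^ k)⁻¹)
    (k : ℕ) (T : Finset (ZMod (p ^ k))) :
    μ {x | PadicInt.toZModPow k x ∈ T} ≤ T.card * ((p : ENNReal) ^ k)⁻¹ := by
  have h1 : {x : ℤ_[p] | PadicInt.toZModPow k x ∈ T}
      ⊆ ⋃ c ∈ T, {x : ℤ_[p] | PadicInt.toZModPow k x = c} := by
    intro x hx
    simpa using hx
  refine (measure_mono h1).trans ((measure_biUnion_finset_le _ _).trans ?_)
  rw [← nsmul_eq_mul]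
  refine Finset.sum_le_card_nsmul _ _ _ fun c _ => ?_
  obtain ⟨a, rfl⟩ := ZMod.ringHom_surjective (PadicInt.toZModPow (p := p) k) c
  rw [← hμ k a]
  apply measure_mono
  intro x hx
  rw [Set.mem_setOf_eq] at hx ⊢
  rw [Ideal.span_singleton_pow, ← PadicInt.ker_toZModPow, RingHom.mem_ker, map_sub, hx, sub_self]

lemma aux_lower (p : ℕ) [Fact p.Prime] [MeasurableSpace ℤ_[p]] (μ : Measure ℤ_[p])
    (hμ : ∀ (k : ℕ) (a : ℤ_[p]),
      μ {x : ℤ_[p] | x - a ∈ Ideal.span {(p : ℤ_[p])} ^ k} = ((p : ENNReal) ^ k)⁻¹)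
    (hu : μ Set.univ = 1)
    (k : ℕ) (T : Finset (ZMod (p ^ k))) :
    T.card * ((p : ENNReal) ^ k)⁻¹ ≤ μ {x | PadicInt.toZModPow k x ∈ T} := by
  classical
  have hp0 : (p : ENNReal) ^ k ≠ 0 := pow_ne_zero _ (by exact_mod_cast (Fact.out : p.Prime).ne_zero)
  have hpt : (p : ENNReal) ^ k ≠ ⊤ := ENNReal.pow_ne_top (ENNReal.natCast_ne_top p)
  have : NeZero (p ^ k) := ⟨pow_ne_zero _ (Fact.out : p.Prime).ne_zero⟩
  have h2 := aux_upper p μ hμ k Tᶜ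
  have h3 : (1 : ENNReal) ≤ μ {x | PadicInt.toZModPow k x ∈ T}
      + μ {x | PadicInt.toZModPow k x ∈ Tᶜ} := by
    rw [← hu]
    refine (measure_mono ?_).trans (measure_union_le _ _)
    intro x _
    simp [em]
  have h4 : (T.card : ENNReal) * ((p : ENNReal) ^ k)⁻¹
      + (Tᶜ.card : ENNReal) * ((p : ENNReal) ^ k)⁻¹ = 1 := by
    rw [← add_mul, ← Nat.cast_add, Finset.card_add_card_compl, ZMod.card, Nat.cast_pow,
      ENNReal.mul_inv_cancel hp0 hpt]
  have h5 : (Tᶜ.card : ENNReal) * ((p : ENNReal) ^ k)⁻¹ ≠ ⊤ :=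
    ENNReal.mul_ne_top (ENNReal.natCast_ne_top _) (ENNReal.inv_ne_top.2 hp0)
  refine (ENNReal.add_le_add_iff_right h5).1 ?_
  rw [h4]
  exact h3.trans (by gcongr)

lemma aux_level (p : ℕ) [Fact p.Prime] (R : Set ℤ_[p]) (hc : IsCompact R) (ho : IsOpen R) :
    ∃ k : ℕ, ∀ x y : ℤ_[p], PadicInt.toZModPow k x = PadicInt.toZModPow k y → x ∈ R → y ∈ R := by
  obtain ⟨δ, hδ, h⟩ := hc.exists_thickening_subset_open ho subset_rfl
  obtain ⟨k, hk⟩ := PadicInt.exists_pow_neg_lt p hδ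
  refine ⟨k, fun x y hxy hx => h ?_⟩
  rw [Metric.mem_thickening_iff]
  refine ⟨x, hx, lt_of_le_of_lt ?_ hk⟩
  rw [dist_eq_norm, PadicInt.norm_le_pow_iff_mem_span_pow, ← PadicInt.ker_toZModPow,
    RingHom.mem_ker, map_sub, hxy, sub_self]



/-- Local covering lemma: let `μ` be the Haar probability measure on `ℤ_p` (it assigns
measure `p^{-k}` to every residue class modulo `p^k`), let `M` be a `ℤ_p`-submodule of
`ℤ_pⁿ`, and let `R₁, …, Rₙ ⊆ ℤ_p` be compact open sets with `∑ μ(Rᵢ) < 1`. If `M`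
contains a vector all of whose coordinates are units, then every coset `a + M` contains
a point `y` with `yᵢ ∉ Rᵢ` for all `i`. -/
theorem coset_avoids_sieve (p : ℕ) [Fact p.Prime] (n : ℕ) (hn : 1 ≤ n)
    [MeasurableSpace ℤ_[p]] (μ : Measure ℤ_[p])
    (hμ : ∀ (k : ℕ) (a : ℤ_[p]),
      μ {x : ℤ_[p] | x - a ∈ Ideal.span {(p : ℤ_[p])} ^ k} = ((p : ENNReal) ^ k)⁻¹)
    (M : Submodule ℤ_[p] (Fin n → ℤ_[p]))
    (R : Fin n → Set ℤ_[p])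
    (hRc : ∀ i, IsCompact (R i)) (hRo : ∀ i, IsOpen (R i))
    (hsum : ∑ i, μ (R i) < 1)
    (hM : ∃ x ∈ M, ∀ i, IsUnit (x i)) :
    ∀ a : Fin n → ℤ_[p], ∃ y : Fin n → ℤ_[p], y - a ∈ M ∧ ∀ i, y i ∉ R i := by
  classical
  obtain ⟨u, huM, hunit⟩ := hM
  intro a
  have hu : μ Set.univ = 1 := by simpa using hμ 0 0
  have key : ∀ i, μ {t : ℤ_[p] | a i + t * u i ∈ R i} ≤ μ (R i) := by
    intro i
    obtain ⟨k, hk⟩ := aux_level p (R i) (hRc i) (hRo i)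
    have : NeZero (p ^ k) := ⟨pow_ne_zero _ (Fact.out : p.Prime).ne_zero⟩
    let φ := PadicInt.toZModPow (p := p) k
    let T : Finset (ZMod (p ^ k)) := Finset.univ.filter fun c => ∃ x ∈ R i, φ x = c
    let T' : Finset (ZMod (p ^ k)) := Finset.univ.filter fun c => φ (a i) + c * φ (u i) ∈ T
    have hT : {x | φ x ∈ T} ⊆ R i := by
      intro x hx
      obtain ⟨y, hy, hyx⟩ := (Finset.mem_filter.1 hx).2
      exact hk y x hyx hy
    have hT' : {t : ℤ_[p] | a i + t * u i ∈ R i} ⊆ {t | φ t ∈ T'} := by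
      intro t ht
      refine Finset.mem_filter.2 ⟨Finset.mem_univ _, Finset.mem_filter.2 ⟨Finset.mem_univ _, _, ht, ?_⟩⟩
      simp
    have hcard : T'.card ≤ T.card := by
      refine Finset.card_le_card_of_injOn (fun c => φ (a i) + c * φ (u i))
        (fun c hc => (Finset.mem_filter.1 hc).2) ?_
      intro c _ d _ hcd
      exact ((hunit i).map φ).mul_right_cancel (add_left_cancel hcd)
    calc _ ≤ μ {t | φ t ∈ T'} := measure_mono hT'
      _ ≤ T'.card * ((p : ENNReal) ^ k)⁻¹ := aux_upper p μ hμ k T'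
      _ ≤ T.card * ((p : ENNReal) ^ k)⁻¹ := by gcongr
      _ ≤ μ {t | φ t ∈ T} := aux_lower p μ hμ hu k T
      _ ≤ μ (R i) := measure_mono hT
  by_contra! hcon
  have hcov : (Set.univ : Set ℤ_[p]) ⊆ ⋃ i ∈ (Finset.univ : Finset (Fin n)),
      {t : ℤ_[p] | a i + t * u i ∈ R i} := by
    intro t _
    obtain ⟨i, hi⟩ := hcon (a + t • u) (by simpa using M.smul_mem t huM)
    simp only [Set.mem_iUnion]
    exact ⟨i, Finset.mem_univ _, by simpa using hi⟩
  have := (measure_mono (μ := μ) hcov).trans (measure_biUnion_finset_le _ _)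
  rw [hu] at this
  exact absurd (this.trans (Finset.sum_le_sum fun i _ => key i)) (not_le.2 hsum)
end

section
/- Let G and H be groups (written additively), let 𝕏 ⊆ 𝒫(G) and 𝕐 ⊆ 𝒫(H) be shift spaces over G and H respectively, let A : G → H be a group homomorphism and f : 𝕏 → 𝕐 a continuous map satisfying f(g + X) = A(g) + f(X) for all g ∈ G and X ∈ 𝕏. Then there exist a finite subset M ⊆ G and a family 𝒯 of subsets of M such that for all x ∈ G and X ∈ 𝕏: A(x) ∈ f(X) if and only if X ∩ (x + M) = x + T for some T ∈ 𝒯. -/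
/-- The product (Cantor) topology on the power set `𝒫(G) ≅ {0,1}^G`, induced by the
characteristic-function embedding into `G → Bool` (with `Bool` discrete and the product
topology). -/
noncomputable instance powerSetTopology (G : Type*) : TopologicalSpace (Set G) :=
  TopologicalSpace.induced
    (fun (S : Set G) (g : G) => @decide (g ∈ S) (Classical.propDecidable _))
    inferInstance

theorem psInd (G : Type*) : Topology.IsInducing
    (fun (S : Set G) (g : G) => @decide (g ∈ S) (Classical.propDecidable _)) := ⟨rfl⟩

theorem psCompact (G : Type*) : CompactSpace (Set G) := by
  constructor
  rw [(psInd G).isCompact_iff, Set.image_univ, Set.range_eq_univ.2]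
  · exact isCompact_univ
  · intro b
    refine ⟨{g | b g = true}, ?_⟩
    funext g
    simp

theorem psLocal {G : Type*} (𝕏 : Set (Set G)) (C : Set 𝕏) (hC : IsOpen C) (X : 𝕏) (hX : X ∈ C) :
    ∃ I : Finset G, ∀ Y : 𝕏, (∀ i ∈ I, i ∈ (Y : Set G) ↔ i ∈ (X : Set G)) → Y ∈ C := by
  obtain ⟨V, hV, rfl⟩ := ((psInd G).comp Topology.IsInducing.subtypeVal).isOpen_iff.1 hC
  obtain ⟨I, u, hu, hs⟩ := isOpen_pi_iff.1 hV _ hX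
  refine ⟨I, fun Y hY => hs ?_⟩
  intro i hi
  have h := (hu i hi).2
  have h2 := hY i hi
  simp only [Function.comp] at h ⊢
  have h3 : @decide (i ∈ (Y : Set G)) (Classical.propDecidable _) =
      @decide (i ∈ (X : Set G)) (Classical.propDecidable _) := decide_eq_decide.2 h2
  rw [h3]
  exact h

theorem psCoord {G : Type*} (g : G) : IsClopen {S : Set G | g ∈ S} := by
  have h : IsClopen ((fun S : Set G => @decide (g ∈ S) (Classical.propDecidable _)) ⁻¹' {true}) :=
    (isClopen_discrete _).preimage ((continuous_apply g).comp (psInd G).continuous)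
  convert h using 1
  ext S
  simp

theorem psNhd {G : Type*} (𝕏 : Set (Set G)) (X : 𝕏) (I : Finset G) :
    IsOpen {Y : 𝕏 | ∀ i ∈ I, i ∈ (Y : Set G) ↔ i ∈ (X : Set G)} := by
  have : {Y : 𝕏 | ∀ i ∈ I, i ∈ (Y : Set G) ↔ i ∈ (X : Set G)} =
      ⋂ i ∈ I, {Y : 𝕏 | i ∈ (Y : Set G) ↔ i ∈ (X : Set G)} := by
    ext Y; simp
  rw [this]
  refine isOpen_biInter_finset fun i _ => ?_
  have hc := (psCoord i).preimage (continuous_subtype_val (p := fun S => S ∈ 𝕏))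
  by_cases h : i ∈ (X : Set G)
  · simp only [h, iff_true]; exact hc.2
  · simp only [h, iff_false]; exact hc.compl.2

theorem psWindow {G : Type*} (𝕏 : Set (Set G)) (h : IsClosed 𝕏) (C : Set 𝕏) (hC : IsClopen C) :
    ∃ M : Finset G, ∀ X Y : 𝕏, (∀ i ∈ M, i ∈ (Y : Set G) ↔ i ∈ (X : Set G)) → (X ∈ C) → Y ∈ C := by
  classical
  haveI := psCompact G
  haveI : CompactSpace 𝕏 := isCompact_iff_compactSpace.1 h.isCompact
  have key : ∀ X : 𝕏, ∃ I : Finset G, ∀ Y : 𝕏,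
      (∀ i ∈ I, i ∈ (Y : Set G) ↔ i ∈ (X : Set G)) → (Y ∈ C ↔ X ∈ C) := by
    intro X
    by_cases hX : X ∈ C
    · obtain ⟨I, hI⟩ := psLocal 𝕏 C hC.2 X hX
      exact ⟨I, fun Y hY => iff_of_true (hI Y hY) hX⟩
    · obtain ⟨I, hI⟩ := psLocal 𝕏 Cᶜ hC.compl.2 X hX
      exact ⟨I, fun Y hY => iff_of_false (hI Y hY) hX⟩
  choose I hI using key
  obtain ⟨t, ht⟩ := isCompact_univ.elim_finite_subcover
    (fun X : 𝕏 => {Y : 𝕏 | ∀ i ∈ I X, i ∈ (Y : Set G) ↔ i ∈ (X : Set G)})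
    (fun X => psNhd 𝕏 X (I X)) (fun X _ => Set.mem_iUnion.2 ⟨X, fun _ _ => Iff.rfl⟩)
  refine ⟨t.biUnion I, fun X Y hXY hX => ?_⟩
  obtain ⟨Z, hZt, hZ⟩ := Set.mem_iUnion₂.1 (ht (Set.mem_univ X))
  refine (hI Z Y fun i hi => ?_).2 ((hI Z X hZ).1 hX)
  exact (hXY i (Finset.mem_biUnion.2 ⟨Z, hZt, hi⟩)).trans (hZ i hi)

/-- Curtis–Hedlund–Lyndon theorem for morphisms of shift spaces: any morphism
`(A, f) : (G, 𝕏) → (H, 𝕐)` of shift spaces is given by a block code: there are a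
finite window `M ⊆ G` and a family `𝒯` of patterns `T ⊆ M` such that
`A x ∈ f X ↔ X ∩ (x + M) = x + T` for some `T ∈ 𝒯`. -/
theorem curtis_hedlund_lyndon {G H : Type*} [AddGroup G] [AddGroup H]
    (𝕏 : Set (Set G)) (𝕐 : Set (Set H))
    (h𝕏c : IsClosed 𝕏) (h𝕏i : ∀ g : G, ∀ X ∈ 𝕏, (g + ·) '' X ∈ 𝕏)
    (h𝕐c : IsClosed 𝕐) (h𝕐i : ∀ h : H, ∀ Y ∈ 𝕐, (h + ·) '' Y ∈ 𝕐)
    (A : G →+ H) (f : 𝕏 → 𝕐) (hf : Continuous f)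
    (hint : ∀ (g : G) (X Y : 𝕏), (Y : Set G) = (g + ·) '' (X : Set G) →
      ((f Y : Set H)) = (A g + ·) '' ((f X : Set H))) :
    ∃ (M : Finset G) (𝒯 : Set (Set G)), (∀ T ∈ 𝒯, T ⊆ ↑M) ∧
      ∀ (x : G) (X : 𝕏),
        A x ∈ (f X : Set H) ↔
          ∃ T ∈ 𝒯, (X : Set G) ∩ ((x + ·) '' ↑M) = (x + ·) '' T := by
  have hC : IsClopen {X : 𝕏 | (0 : H) ∈ (f X : Set H)} :=
    (psCoord (0 : H)).preimage (continuous_subtype_val.comp hf)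
  obtain ⟨M, hM⟩ := psWindow 𝕏 h𝕏c _ hC
  refine ⟨M, {T | ∃ X : 𝕏, (0 : H) ∈ (f X : Set H) ∧ T = (X : Set G) ∩ ↑M}, ?_, ?_⟩
  · rintro T ⟨X, -, rfl⟩
    exact Set.inter_subset_right
  · intro x X
    let Y : 𝕏 := ⟨(-x + ·) '' (X : Set G), h𝕏i _ _ X.2⟩
    have hY : ∀ g, g ∈ (Y : Set G) ↔ x + g ∈ (X : Set G) := by
      intro g
      simp [Y]
    have hfY : (0 : H) ∈ (f Y : Set H) ↔ A x ∈ (f X : Set H) := by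
      rw [hint (-x) X Y rfl]
      simp
    rw [← hfY]
    constructor
    · intro h0
      refine ⟨_, ⟨Y, h0, rfl⟩, ?_⟩
      ext g
      simp [hY]
    · rintro ⟨T, ⟨Z, hZ, rfl⟩, hT⟩
      refine hM Z Y (fun i hi => ?_) hZ
      have := Set.ext_iff.1 hT (x + i)
      rw [hY]
      simpa [hi] using this
end
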